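/- Let d ≥ 2, let Σ ⊂ GL_d(ℝ) be a compact subset, and let μ₀ be a Borel probability measure supported in Σ which is quasi-irreducible and satisfies L_1(μ₀) > L_2(μ₀). Then μ₀ has a unique stationary measure on projective space: any two μ₀-stationary Borel probability measures on ℙ(ℝ^d) coincide. -/

import Mathlib

open MeasureTheory Filter
open scoped LinearAlgebra.Projectivization

noncomputable section

abbrev GLd (d : ℕ) := GL (Fin d) ℝ
abbrev Ed (d : ℕ) := EuclideanSpace ℝ (Fin d)
abbrev Pd (d : ℕ) := ℙ ℝ (Ed d)

variable {d : ℕ}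

instance : MeasurableSpace (GLd d) := borel _
instance : BorelSpace (GLd d) := ⟨rfl⟩

instance : TopologicalSpace (Pd d) :=
  (instTopologicalSpaceQuotient : TopologicalSpace (Quotient (projectivizationSetoid ℝ (Ed d))))
instance : MeasurableSpace (Pd d) := borel _
instance : BorelSpace (Pd d) := ⟨rfl⟩

/-- The continuous linear map on Euclidean space induced by `g ∈ GL_d(ℝ)`. -/
def glCLM (g : GLd d) : Ed d →L[ℝ] Ed d :=
  Matrix.toEuclideanCLM (𝕜 := ℝ) (g : Matrix (Fin d) (Fin d) ℝ)

/-- The operator norm of `g ∈ GL_d(ℝ)`. -/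
def gnorm (g : GLd d) : ℝ := ‖glCLM g‖

lemma glCLM_leftInv (g : GLd d) (v : Ed d) : glCLM g⁻¹ (glCLM g v) = v := by
  have h : glCLM (d := d) g⁻¹ * glCLM g = 1 := by
    rw [glCLM, glCLM, ← map_mul]
    norm_cast
    rw [inv_mul_cancel g]
    exact map_one _
  calc glCLM g⁻¹ (glCLM g v) = (glCLM g⁻¹ * glCLM g) v := rfl
    _ = v := by rw [h]; rfl

lemma glLinear_injective (g : GLd d) : Function.Injective (glCLM g).toLinearMap :=
  Function.LeftInverse.injective (g := (glCLM g⁻¹)) (fun v => glCLM_leftInv g v)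

/-- The projective action of `g ∈ GL_d(ℝ)` on `ℙ(ℝ^d)`. -/
def pact (g : GLd d) : Pd d → Pd d :=
  Projectivization.map (glCLM g).toLinearMap (glLinear_injective g)

/-- The projective distance `δ` on `ℙ(ℝ^d)`, computed on representatives. -/
def pdelta (x y : Pd d) : ℝ :=
  Real.sqrt (‖x.rep‖ ^ 2 * ‖y.rep‖ ^ 2 - (inner ℝ x.rep y.rep : ℝ) ^ 2) /
    (‖x.rep‖ * ‖y.rep‖)

/-- Convolution of two measures on `GL_d(ℝ)`. -/
def mconv (μ ν : Measure (GLd d)) : Measure (GLd d) :=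
  (μ.prod ν).map (fun p => p.1 * p.2)

/-- `n`-fold convolution power of a measure on `GL_d(ℝ)`. -/
def mconvN (μ : Measure (GLd d)) : ℕ → Measure (GLd d)
  | 0 => Measure.dirac 1
  | n + 1 => if n = 0 then μ else mconv (mconvN μ n) μ

/-- The top Lyapunov exponent of a (compactly supported) measure on `GL_d(ℝ)`. -/
def L1 (μ : Measure (GLd d)) : ℝ :=
  limUnder atTop (fun n : ℕ => (n : ℝ)⁻¹ * ∫ g, Real.log (gnorm g) ∂(mconvN μ n))

/-- `N₂ g = s₁(g)s₂(g)`, the product of the two largest singular values. -/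
def N2 (g : GLd d) : ℝ :=
  sSup { x | ∃ p q : Ed d, ‖p‖ = 1 ∧ ‖q‖ = 1 ∧ (inner ℝ p q : ℝ) = 0 ∧
    x = Real.sqrt (‖glCLM g p‖ ^ 2 * ‖glCLM g q‖ ^ 2 -
      (inner ℝ (glCLM g p) (glCLM g q) : ℝ) ^ 2) }

/-- `L₁(μ) + L₂(μ)`. -/
def L12 (μ : Measure (GLd d)) : ℝ :=
  limUnder atTop (fun n : ℕ => (n : ℝ)⁻¹ * ∫ g, Real.log (N2 g) ∂(mconvN μ n))

/-- The second Lyapunov exponent. -/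
def L2 (μ : Measure (GLd d)) : ℝ := L12 μ - L1 μ

/-- The top Lyapunov exponent of the restriction of `μ` to an (invariant) subspace `V`. -/
def L1rest (μ : Measure (GLd d)) (V : Submodule ℝ (Ed d)) : ℝ :=
  limUnder atTop (fun n : ℕ => (n : ℝ)⁻¹ *
    ∫ g, Real.log ‖LinearMap.toContinuousLinearMap ((glCLM g).toLinearMap.domRestrict V)‖
      ∂(mconvN μ n))

/-- Quasi-irreducibility of a measure on `GL_d(ℝ)`. -/
def QuasiIrreducible (μ : Measure (GLd d)) : Prop :=
  ¬ ∃ V : Submodule ℝ (Ed d), V ≠ ⊥ ∧ V ≠ ⊤ ∧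
    (∀ᵐ g ∂μ, V.map (glCLM g).toLinearMap = V) ∧ L1rest μ V < L1 μ

/-- Irreducibility of a measure on `GL_d(ℝ)`. -/
def Irred (μ : Measure (GLd d)) : Prop :=
  ¬ ∃ V : Submodule ℝ (Ed d), V ≠ ⊥ ∧ V ≠ ⊤ ∧
    (∀ᵐ g ∂μ, V.map (glCLM g).toLinearMap = V)

/-- The Markov operator associated with a measure on `GL_d(ℝ)`. -/
def Qop (μ : Measure (GLd d)) (φ : Pd d → ℝ) : Pd d → ℝ :=
  fun v => ∫ g, φ (pact g v) ∂μ

/-- The average `α`-Hölder constant of a measure on `GL_d(ℝ)`. -/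
def kalpha (α : ℝ) (μ : Measure (GLd d)) : ℝ :=
  sSup { x | ∃ v₁ v₂ : Pd d, v₁ ≠ v₂ ∧
    x = ∫ g, (pdelta (pact g v₁) (pact g v₂) / pdelta v₁ v₂) ^ α ∂μ }

/-- The `α`-Hölder seminorm of an observable on `ℙ(ℝ^d)`. -/
def valpha (α : ℝ) (φ : Pd d → ℝ) : ℝ :=
  sSup { x | ∃ v₁ v₂ : Pd d, v₁ ≠ v₂ ∧ x = |φ v₁ - φ v₂| / pdelta v₁ v₂ ^ α }

/-- `φ` is `α`-Hölder: `v_α(φ) < ∞`. -/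
def IsHolder (α : ℝ) (φ : Pd d → ℝ) : Prop :=
  BddAbove { x | ∃ v₁ v₂ : Pd d, v₁ ≠ v₂ ∧ x = |φ v₁ - φ v₂| / pdelta v₁ v₂ ^ α }

/-- The total variation distance between two finite measures. -/
def tvDist (μ ν : Measure (GLd d)) [IsFiniteMeasure μ] [IsFiniteMeasure ν] : ℝ :=
  ((μ.toSignedMeasure - ν.toSignedMeasure).totalVariation Set.univ).toReal

/-- A measure is compactly supported. -/
def CompactlySupported (μ : Measure (GLd d)) : Prop :=
  ∃ K : Set (GLd d), IsCompact K ∧ μ Kᶜ = 0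

/-- `S` is the (topological) support of `μ`. -/
def IsSupport (μ : Measure (GLd d)) (S : Set (GLd d)) : Prop :=
  μ Sᶜ = 0 ∧ ∀ x ∈ S, ∀ U : Set (GLd d), IsOpen U → x ∈ U → 0 < μ U

/-- A measure `η` on `ℙ(ℝ^d)` is `μ`-stationary. -/
def Stationary (μ : Measure (GLd d)) (η : Measure (Pd d)) : Prop :=
  ∀ φ : Pd d → ℝ, Continuous φ → (∃ C, ∀ v, |φ v| ≤ C) →
    ∫ v, φ v ∂η = ∫ g, ∫ v, φ (pact g v) ∂η ∂μ

/-!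
The logarithmic norm cocycle `σ(g, v̂) = log (‖g v‖ / ‖v‖)` has a smallest mean growth rate `β`, and
a stationary measure `η` under which `β` is its mean. Exponential moments bound the probability that
`σ` falls below `n (β - ε)` uniformly in the starting point, while under `η` the mean growth is
exactly `β`; hence for `η`-almost every `x` the growth from `x` does not exceed `β` either, in mean
and along a subsequence. The smallest subspace containing `η`-almost every line is invariant and
spanned by finitely many such `x`, so the exponent of the restriction to it is at most `β`;
quasi-irreducibility then gives `L₁ ≤ β`.

Consequently `log s₁s₂(g) - σ(g, x) - σ(g, y)`, which bounds the expansion of the projective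
distance `δ(x, y)`, has mean at most `n (L₁ + L₂ - 2 L₁ + o(1))` after `n` steps, uniformly in `x`
and `y`. This is eventually negative, and by exponential moments again a small power of `δ` is
contracted on average. Two stationary measures, integrated against a continuous function and
averaged over `n` steps of the walk, therefore differ by arbitrarily little.
-/

section ConvolutionPower

variable {G : Type*} [Monoid G] [MeasurableSpace G]

/-- The convolution power `μ^{*n}` of a measure on a monoid: the law at time `n` of the random walk
with step law `μ` started at `1`. -/
def convPow (μ : Measure G) : ℕ → Measure G
  | 0 => Measure.dirac 1
  | n + 1 => (convPow μ n).mconv μ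

variable [MeasurableMul₂ G] (μ : Measure G)

instance isProbabilityMeasure_convPow [IsProbabilityMeasure μ] :
    ∀ n, IsProbabilityMeasure (convPow μ n)
  | 0 => inferInstanceAs (IsProbabilityMeasure (Measure.dirac 1))
  | n + 1 =>
    have := isProbabilityMeasure_convPow n
    inferInstanceAs (IsProbabilityMeasure ((convPow μ n).mconv μ))

lemma convPow_one [SFinite μ] : convPow μ 1 = μ :=
  Measure.dirac_one_mconv μ

lemma convPow_add [IsProbabilityMeasure μ] (m n : ℕ) :
    convPow μ (m + n) = (convPow μ m).mconv (convPow μ n) := by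
  induction n with
  | zero => exact (Measure.mconv_dirac_one _).symm
  | succ n ih =>
    change (convPow μ (m + n)).mconv μ = (convPow μ m).mconv ((convPow μ n).mconv μ)
    rw [ih, Measure.mconv_assoc]

lemma convPow_convPow [IsProbabilityMeasure μ] (m k : ℕ) :
    convPow (convPow μ m) k = convPow μ (m * k) := by
  induction k with
  | zero => rfl
  | succ k ih => rw [Nat.mul_succ, convPow_add μ, ← ih]; rfl

variable {μ}

lemma ae_convPow_mem {T : Submonoid G} (hT : MeasurableSet (T : Set G)) (hμ : ∀ᵐ g ∂μ, g ∈ T)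
    (n : ℕ) : ∀ᵐ g ∂convPow μ n, g ∈ T := by
  induction n with
  | zero => exact (ae_dirac_iff hT).2 T.one_mem
  | succ n ih =>
    refine (ae_map_iff measurable_mul.aemeasurable hT).2 ?_
    filter_upwards [Measure.quasiMeasurePreserving_fst.ae ih,
      Measure.quasiMeasurePreserving_snd.ae hμ] with p hp₁ hp₂
    exact T.mul_mem hp₁ hp₂

end ConvolutionPower

section CompactSupport

/-- A measure on a topological space is compactly supported if it is carried by a compact set;
on `GL_d(ℝ)` this is `CompactlySupported`. -/
def IsCompactlySupported {X : Type*} [TopologicalSpace X] [MeasurableSpace X]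
    (μ : Measure X) : Prop :=
  ∃ K : Set X, IsCompact K ∧ ∀ᵐ x ∂μ, x ∈ K

namespace IsCompactlySupported

section Space

variable {X Y : Type*} [TopologicalSpace X] [TopologicalSpace Y] [MeasurableSpace X]
  {μ : Measure X}

lemma of_compactSpace [CompactSpace X] (μ : Measure X) : IsCompactlySupported μ :=
  ⟨Set.univ, isCompact_univ, ae_of_all _ Set.mem_univ⟩

lemma exists_bound [CompactSpace Y] {f : X → Y → ℝ} (hμ : IsCompactlySupported μ)
    (hf : Continuous (Function.uncurry f)) : ∃ M, ∀ᵐ x ∂μ, ∀ y, |f x y| ≤ M := by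
  obtain ⟨K, hK, hμK⟩ := hμ
  obtain ⟨M, hM⟩ := (hK.prod isCompact_univ).exists_bound_of_continuousOn hf.continuousOn
  exact ⟨M, hμK.mono fun x hx y => hM (x, y) ⟨hx, Set.mem_univ y⟩⟩

lemma integrable [OpensMeasurableSpace X] [IsFiniteMeasure μ] {f : X → ℝ}
    (hμ : IsCompactlySupported μ) (hf : Continuous f) : Integrable f μ := by
  obtain ⟨K, hK, hμK⟩ := hμ
  obtain ⟨M, hM⟩ := hK.exists_bound_of_continuousOn hf.continuousOn
  exact .of_bound hf.aestronglyMeasurable M (hμK.mono hM)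

lemma continuous_integral [OpensMeasurableSpace X] [IsFiniteMeasure μ]
    [FirstCountableTopology Y] [LocallyCompactSpace Y] {f : Y → X → ℝ}
    (hμ : IsCompactlySupported μ) (hf : Continuous (Function.uncurry f)) :
    Continuous fun y => ∫ x, f y x ∂μ := by
  obtain ⟨K, hK, hμK⟩ := hμ
  simpa only [Measure.restrict_eq_self_of_ae_mem hμK] using
    continuous_parametric_integral_of_continuous (μ := μ) hf hK

variable [MeasurableSpace Y]

lemma prod [SFinite μ] {ν : Measure Y} [SFinite ν] (hμ : IsCompactlySupported μ)
    (hν : IsCompactlySupported ν) : IsCompactlySupported (μ.prod ν) := by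
  obtain ⟨K, hK, hμK⟩ := hμ
  obtain ⟨K', hK', hνK'⟩ := hν
  refine ⟨K ×ˢ K', hK.prod hK', ?_⟩
  filter_upwards [Measure.quasiMeasurePreserving_fst.ae hμK,
    Measure.quasiMeasurePreserving_snd.ae hνK'] with p hp₁ hp₂
  exact ⟨hp₁, hp₂⟩

lemma map [OpensMeasurableSpace X] [BorelSpace Y] [T2Space Y] {f : X → Y}
    (hμ : IsCompactlySupported μ) (hf : Continuous f) : IsCompactlySupported (μ.map f) := by
  obtain ⟨K, hK, hμK⟩ := hμ
  have hfK : IsCompact (f '' K) := hK.image hf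
  exact ⟨f '' K, hfK, (ae_map_iff hf.aemeasurable hfK.measurableSet).2 <|
    hμK.mono fun x hx => Set.mem_image_of_mem f hx⟩

lemma integrable_integral [OpensMeasurableSpace (X × Y)] {ν : Measure Y}
    [IsFiniteMeasure μ] [IsFiniteMeasure ν] {f : X → Y → ℝ} (hμ : IsCompactlySupported μ)
    (hν : IsCompactlySupported ν) (hf : Continuous (Function.uncurry f)) :
    Integrable (fun y => ∫ x, f x y ∂μ) ν :=
  ((hμ.prod hν).integrable hf).integral_prod_right

end Space

section Monoid

variable {G : Type*} [Monoid G] [TopologicalSpace G] [ContinuousMul G] [T2Space G]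
  [SecondCountableTopology G] [MeasurableSpace G] [BorelSpace G] {μ : Measure G}
  [IsProbabilityMeasure μ]

protected lemma convPow (hμ : IsCompactlySupported μ) (n : ℕ) :
    IsCompactlySupported (convPow μ n) := by
  induction n with
  | zero =>
    exact ⟨{1}, isCompact_singleton, (ae_dirac_iff (measurableSet_singleton 1)).2 rfl⟩
  | succ n ih => exact (ih.prod hμ).map continuous_mul

-- Listing the later increment `g` inside and the past `h` outside lets a cocycle split as
-- `σ (g * h) x = σ g (h • x) + σ h x`.
lemma integral_convPow_add (hμ : IsCompactlySupported μ) {f : G → ℝ} (hf : Continuous f)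
    (m n : ℕ) :
    ∫ g, f g ∂convPow μ (m + n) = ∫ h, ∫ g, f (g * h) ∂convPow μ m ∂convPow μ n := by
  have hint : Integrable (fun p : G × G => f (p.1 * p.2)) ((convPow μ m).prod (convPow μ n)) :=
    ((hμ.convPow m).prod (hμ.convPow n)).integrable (by fun_prop)
  calc ∫ g, f g ∂convPow μ (m + n)
    _ = ∫ p : G × G, f (p.1 * p.2) ∂(convPow μ m).prod (convPow μ n) := by
        rw [convPow_add, Measure.mconv, integral_map (by fun_prop) hf.aestronglyMeasurable]
    _ = ∫ h, ∫ g, f (g * h) ∂convPow μ m ∂convPow μ n := integral_prod_symm _ hint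

end Monoid

end IsCompactlySupported

end CompactSupport

section SubadditiveFunction

variable {G : Type*} [Group G] [TopologicalSpace G] [IsTopologicalGroup G] [T2Space G]
  [SecondCountableTopology G] [MeasurableSpace G] [BorelSpace G] {μ : Measure G}
  [IsProbabilityMeasure μ] {F : G → ℝ} {T : Submonoid G}

lemma integral_convPow_add_le (hμ : IsCompactlySupported μ) (hF : Continuous F)
    (hT : IsClosed (T : Set G)) (hμT : ∀ᵐ g ∂μ, g ∈ T)
    (hadd : ∀ g, ∀ h ∈ T, F (g * h) ≤ F g + F h) (m n : ℕ) :
    ∫ g, F g ∂convPow μ (m + n) ≤ ∫ g, F g ∂convPow μ m + ∫ g, F g ∂convPow μ n := by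
  have hFm := (hμ.convPow m).integrable hF
  have hFn := (hμ.convPow n).integrable hF
  calc ∫ g, F g ∂convPow μ (m + n)
    _ = ∫ h, ∫ g, F (g * h) ∂convPow μ m ∂convPow μ n := hμ.integral_convPow_add hF m n
    _ ≤ ∫ h, (∫ g, F g ∂convPow μ m + F h) ∂convPow μ n := by
        refine integral_mono_ae ((hμ.convPow m).integrable_integral
          (hμ.convPow n) (by fun_prop)) ((integrable_const _).add hFn) ?_
        filter_upwards [ae_convPow_mem hT.measurableSet hμT n] with h hh
        calc ∫ g, F (g * h) ∂convPow μ m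
          _ ≤ ∫ g, (F g + F h) ∂convPow μ m :=
              integral_mono ((hμ.convPow m).integrable (by fun_prop))
                (hFm.add (integrable_const _)) fun g => hadd g h hh
          _ = ∫ g, F g ∂convPow μ m + F h := by
              rw [integral_add hFm (integrable_const _), integral_const, probReal_univ, one_smul]
    _ = _ := by rw [integral_add (integrable_const _) hFn, integral_const, probReal_univ, one_smul]

lemma le_integral_convPow (hμ : IsCompactlySupported μ) (hF : Continuous F)
    (hT : IsClosed (T : Set G)) (hμT : ∀ᵐ g ∂μ, g ∈ T)
    (hadd : ∀ g, ∀ h ∈ T, F (g * h) ≤ F g + F h) (n : ℕ) :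
    F 1 - n * ∫ g, F g⁻¹ ∂μ ≤ ∫ g, F g ∂convPow μ n := by
  induction n with
  | zero => simp [convPow]
  | succ n ih =>
    have hFinv : Integrable (fun g => F g⁻¹) μ := hμ.integrable (by fun_prop)
    have hFn := (hμ.convPow n).integrable hF
    have hstep : ∫ h, (F h - ∫ g, F g⁻¹ ∂μ) ∂convPow μ n ≤ ∫ g, F g ∂convPow μ (1 + n) := by
      rw [hμ.integral_convPow_add hF, convPow_one]
      refine integral_mono_ae (hFn.sub (integrable_const _))
        (hμ.integrable_integral (hμ.convPow n) (by fun_prop)) ?_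
      filter_upwards [ae_convPow_mem hT.measurableSet hμT n] with h hh
      calc F h - ∫ g, F g⁻¹ ∂μ
        _ = ∫ g, (F h - F g⁻¹) ∂μ := by
            rw [integral_sub (integrable_const _) hFinv, integral_const, probReal_univ, one_smul]
        _ ≤ ∫ g, F (g * h) ∂μ := by
            refine integral_mono_ae ((integrable_const _).sub hFinv)
              (hμ.integrable (by fun_prop)) ?_
            filter_upwards [hμT] with g hg
            have := hadd g⁻¹ (g * h) (T.mul_mem hg hh)
            rw [inv_mul_cancel_left] at this
            simpa only [sub_le_iff_le_add'] using this
    rw [integral_sub hFn (integrable_const _), integral_const, probReal_univ, one_smul] at hstep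
    rw [add_comm n 1]
    push_cast
    linarith

lemma exists_tendsto_integral_convPow_of_subadditive (hμ : IsCompactlySupported μ)
    (hF : Continuous F) (hT : IsClosed (T : Set G)) (hμT : ∀ᵐ g ∂μ, g ∈ T)
    (hadd : ∀ g, ∀ h ∈ T, F (g * h) ≤ F g + F h) :
    ∃ L, Tendsto (fun n : ℕ => (n : ℝ)⁻¹ * ∫ g, F g ∂convPow μ n) atTop (nhds L) := by
  have hsub : Subadditive fun n => ∫ g, F g ∂convPow μ n :=
    integral_convPow_add_le hμ hF hT hμT hadd
  have hbdd : BddBelow (Set.range fun n : ℕ => (∫ g, F g ∂convPow μ n) / n) := by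
    refine ⟨-(|F 1| + |∫ g, F g⁻¹ ∂μ|), ?_⟩
    rintro _ ⟨n, rfl⟩
    rcases n.eq_zero_or_pos with rfl | hn
    · have : 0 ≤ |F 1| + |∫ g, F g⁻¹ ∂μ| := by positivity
      simpa only [Nat.cast_zero, div_zero, neg_nonpos] using this
    have hn' : (1 : ℝ) ≤ n := by exact_mod_cast hn
    rw [le_div_iff₀ (by positivity)]
    calc -(|F 1| + |∫ g, F g⁻¹ ∂μ|) * n = -(n * |F 1|) - n * |∫ g, F g⁻¹ ∂μ| := by ring
      _ ≤ F 1 - n * ∫ g, F g⁻¹ ∂μ := by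
          gcongr
          · nlinarith [neg_abs_le (F 1), abs_nonneg (F 1)]
          · exact le_abs_self _
      _ ≤ ∫ g, F g ∂convPow μ n := le_integral_convPow hμ hF hT hμT hadd n
  exact ⟨hsub.lim, by simpa only [div_eq_inv_mul] using hsub.tendsto_lim hbdd⟩

end SubadditiveFunction

section ExponentialMoments

open Real

lemma integral_exp_mul_le {Ω : Type*} [MeasurableSpace Ω] {μ : Measure Ω} [IsProbabilityMeasure μ]
    {Z : Ω → ℝ} {a M t : ℝ} (hZ : AEStronglyMeasurable Z μ) (hM : ∀ᵐ ω ∂μ, |Z ω| ≤ M)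
    (ha : ∫ ω, Z ω ∂μ ≤ a) (ht : 0 ≤ t) (htM : t * M ≤ 1) :
    ∫ ω, exp (t * Z ω) ∂μ ≤ exp (t * a + (t * M) ^ 2) := by
  have hZint : Integrable Z μ := .of_bound hZ M hM
  have htZ : ∀ᵐ ω ∂μ, |t * Z ω| ≤ t * M := by
    filter_upwards [hM] with ω hω
    rw [abs_mul, abs_of_nonneg ht]
    gcongr
  have hexp : Integrable (fun ω => exp (t * Z ω)) μ := by
    refine .of_bound (continuous_exp.comp_aestronglyMeasurable (hZ.const_mul t)) (exp 1) ?_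
    filter_upwards [htZ] with ω hω
    rw [norm_of_nonneg (exp_pos _).le]
    exact exp_le_exp.2 ((le_abs_self _).trans (hω.trans htM))
  calc ∫ ω, exp (t * Z ω) ∂μ
    _ ≤ ∫ ω, (t * Z ω + (1 + (t * M) ^ 2)) ∂μ := by
        refine integral_mono_ae hexp ((hZint.const_mul t).add (integrable_const _)) ?_
        filter_upwards [htZ] with ω hω
        have hquad := (abs_le.1 (abs_exp_sub_one_sub_id_le (hω.trans htM))).2
        have hsq : (t * Z ω) ^ 2 ≤ (t * M) ^ 2 := sq_le_sq' (abs_le.1 hω).1 (abs_le.1 hω).2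
        linarith
    _ = t * ∫ ω, Z ω ∂μ + (1 + (t * M) ^ 2) := by
        rw [integral_add (hZint.const_mul t) (integrable_const _), integral_const_mul,
          integral_const, probReal_univ, one_smul]
    _ ≤ t * a + (t * M) ^ 2 + 1 := by linarith [mul_le_mul_of_nonneg_left ha ht]
    _ ≤ exp (t * a + (t * M) ^ 2) := add_one_le_exp _

/-- A continuous subadditive cocycle over an action. -/
structure IsSubcocycle {G X : Type*} [Monoid G] [MulAction G X] [TopologicalSpace G]
    [TopologicalSpace X] (σ : G → X → ℝ) : Prop where
  continuous : Continuous (Function.uncurry σ)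
  map_mul_le : ∀ g h x, σ (g * h) x ≤ σ g (h • x) + σ h x

variable {G X : Type*} [Monoid G] [TopologicalSpace G] [ContinuousMul G] [T2Space G]
  [SecondCountableTopology G] [MeasurableSpace G] [BorelSpace G] [TopologicalSpace X]
  [MulAction G X] {μ : Measure G} [IsProbabilityMeasure μ] {σ : G → X → ℝ}

namespace IsSubcocycle

lemma integral_exp_convPow_le (hσ : IsSubcocycle σ) (hμ : IsCompactlySupported μ) {t c : ℝ}
    (ht : 0 ≤ t) (hc : ∀ x, ∫ g, exp (t * σ g x) ∂μ ≤ c) (k : ℕ) (x : X) :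
    ∫ g, exp (t * σ g x) ∂convPow μ (k + 1) ≤ c ^ (k + 1) := by
  have hcont := hσ.continuous
  have hc₀ : 0 ≤ c := (integral_nonneg fun g => (exp_pos _).le).trans (hc x)
  induction k with
  | zero => simpa only [zero_add, convPow_one, pow_one] using hc x
  | succ k ih =>
    have hk := (hμ.convPow (k + 1)).integrable (f := fun h => exp (t * σ h x)) (by fun_prop)
    calc ∫ g, exp (t * σ g x) ∂convPow μ (k + 1 + 1)
      _ = ∫ h, ∫ g, exp (t * σ (g * h) x) ∂μ ∂convPow μ (k + 1) := by
          rw [add_comm, hμ.integral_convPow_add (by fun_prop), convPow_one]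
      _ ≤ ∫ h, c * exp (t * σ h x) ∂convPow μ (k + 1) := by
          refine integral_mono (hμ.integrable_integral (hμ.convPow _) (by fun_prop))
            (hk.const_mul c) fun h => ?_
          calc ∫ g, exp (t * σ (g * h) x) ∂μ
            _ ≤ ∫ g, exp (t * σ g (h • x)) * exp (t * σ h x) ∂μ := by
                refine integral_mono (hμ.integrable (by fun_prop)) (hμ.integrable (by fun_prop))
                  fun g => ?_
                rw [← exp_add, ← mul_add]
                gcongr
                exact hσ.map_mul_le g h x
            _ ≤ c * exp (t * σ h x) := by
                rw [integral_mul_const]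
                gcongr
                exact hc _
      _ ≤ c ^ (k + 1 + 1) := by
          rw [integral_const_mul, pow_succ' c (k + 1)]
          gcongr

lemma exists_integral_exp_convPow_le [CompactSpace X] (hσ : IsSubcocycle σ)
    (hμ : IsCompactlySupported μ) {a b : ℝ} (hab : a < b) (ha : ∀ x, ∫ g, σ g x ∂μ ≤ a) :
    ∃ t, 0 < t ∧ ∀ k x, ∫ g, exp (t * σ g x) ∂convPow μ (k + 1) ≤ exp (t * b) ^ (k + 1) := by
  have hcont := hσ.continuous
  obtain ⟨M, hM⟩ := hμ.exists_bound hcont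
  have hsmall : ∀ᶠ t : ℝ in nhdsWithin 0 (Set.Ioi 0), t * M ≤ 1 ∧ t * M ^ 2 ≤ b - a := by
    have hlim (c : ℝ) : Tendsto (fun t : ℝ => t * c) (nhdsWithin 0 (Set.Ioi 0)) (nhds 0) :=
      ((continuous_mul_const c).tendsto' 0 0 (zero_mul c)).mono_left nhdsWithin_le_nhds
    exact ((hlim M).eventually_le_const one_pos).and
      ((hlim (M ^ 2)).eventually_le_const (sub_pos.2 hab))
  obtain ⟨t, ⟨htM, htab⟩, ht₀ : 0 < t⟩ := (hsmall.and self_mem_nhdsWithin).exists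
  refine ⟨t, ht₀, fun k x => hσ.integral_exp_convPow_le hμ ht₀.le (fun x => ?_) k x⟩
  calc ∫ g, exp (t * σ g x) ∂μ
    _ ≤ exp (t * a + (t * M) ^ 2) :=
        integral_exp_mul_le (Continuous.aestronglyMeasurable (by fun_prop))
          (hM.mono fun g hg => hg x) (ha x) ht₀.le htM
    _ ≤ exp (t * b) := by
        gcongr
        linarith [mul_le_mul_of_nonneg_left htab ht₀.le, show (t * M) ^ 2 = t * (t * M ^ 2) by ring]

end IsSubcocycle

end ExponentialMoments

section Stationarity

/-- `η` is stationary for the random walk with step law `μ`: moving an `η`-distributed point by an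
independent `μ`-distributed element does not change its law. On `ℙ(ℝ^d)` this is `Stationary`. -/
def IsStationaryMeasure {G X : Type*} [SMul G X] [MeasurableSpace G] [MeasurableSpace X]
    (μ : Measure G) (η : Measure X) : Prop :=
  (μ.prod η).map (fun p => p.1 • p.2) = η

lemma IsStationaryMeasure.ae_smul {G X : Type*} [SMul G X] [MeasurableSpace G] [MeasurableSpace X]
    [MeasurableSMul₂ G X] {μ : Measure G} {η : Measure X} [SFinite η]
    (hη : IsStationaryMeasure μ η) {p : X → Prop} (hp : ∀ᵐ x ∂η, p x) :
    ∀ᵐ g ∂μ, ∀ᵐ x ∂η, p (g • x) := by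
  rw [← hη] at hp
  exact Measure.ae_ae_of_ae_prod
    (ae_of_ae_map (f := fun q : G × X => q.1 • q.2) (Measurable.aemeasurable (by fun_prop)) hp)

variable {G X : Type*} [Monoid G] [TopologicalSpace G] [SecondCountableTopology G]
  [MeasurableSpace G] [BorelSpace G] [TopologicalSpace X] [CompactSpace X]
  [MeasurableSpace X] [BorelSpace X] [MulAction G X]
  [ContinuousSMul G X] {μ : Measure G} [IsProbabilityMeasure μ] {η : Measure X}
  [IsProbabilityMeasure η] {f : X → ℝ}

lemma integrable_comp_smul (μ : Measure G) [IsProbabilityMeasure μ] (η : Measure X)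
    [IsProbabilityMeasure η] (hf : Continuous f) :
    Integrable (fun p : G × X => f (p.1 • p.2)) (μ.prod η) := by
  obtain ⟨C, hC⟩ := isCompact_univ.exists_bound_of_continuousOn hf.continuousOn
  exact .of_bound (Continuous.aestronglyMeasurable (by fun_prop)) C
    (ae_of_all _ fun p => hC _ (Set.mem_univ _))

variable [SecondCountableTopology X]

lemma integral_map_smul (hf : Continuous f) :
    ∫ x, f x ∂(μ.prod η).map (fun p => p.1 • p.2) = ∫ x, ∫ g, f (g • x) ∂μ ∂η := by
  rw [integral_map (by fun_prop) hf.aestronglyMeasurable,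
    integral_prod_symm _ (integrable_comp_smul μ η hf)]

lemma isStationaryMeasure_of_forall_integral_eq [T2Space X]
    (h : ∀ f : X → ℝ, Continuous f → ∫ x, f x ∂η = ∫ x, ∫ g, f (g • x) ∂μ ∂η) :
    IsStationaryMeasure μ η := by
  have : IsProbabilityMeasure ((μ.prod η).map (fun p : G × X => p.1 • p.2)) :=
    Measure.isProbabilityMeasure_map (by fun_prop)
  refine ext_of_forall_integral_eq_of_IsFiniteMeasure fun f => ?_
  rw [integral_map_smul f.continuous, h f f.continuous]

namespace IsStationaryMeasure

lemma integral_eq (hη : IsStationaryMeasure μ η) (hf : Continuous f) :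
    ∫ x, f x ∂η = ∫ x, ∫ g, f (g • x) ∂μ ∂η := by
  calc ∫ x, f x ∂η
    _ = ∫ x, f x ∂(μ.prod η).map (fun p => p.1 • p.2) := by rw [hη]
    _ = ∫ x, ∫ g, f (g • x) ∂μ ∂η := integral_map_smul hf

lemma integral_eq_convPow [ContinuousMul G] [T2Space G] [T2Space X]
    (hη : IsStationaryMeasure μ η) (hμ : IsCompactlySupported μ) (hf : Continuous f) (n : ℕ) :
    ∫ x, f x ∂η = ∫ x, ∫ g, f (g • x) ∂convPow μ n ∂η := by
  induction n with
  | zero => simp [convPow]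
  | succ n ih =>
    calc ∫ x, f x ∂η
      _ = ∫ x, ∫ h, ∫ g, f (g • h • x) ∂convPow μ n ∂μ ∂η := by
          rw [ih]; exact hη.integral_eq ((hμ.convPow n).continuous_integral (by fun_prop))
      _ = ∫ x, ∫ g, f (g • x) ∂convPow μ (n + 1) ∂η := by
          refine integral_congr_ae (ae_of_all _ fun x => ?_)
          simp only [← mul_smul]
          rw [hμ.integral_convPow_add (by fun_prop), convPow_one]

end IsStationaryMeasure

end Stationarity

section KrylovBogoliubov

variable {G X : Type*} [Monoid G] [TopologicalSpace G] [SecondCountableTopology G]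
  [MeasurableSpace G] [BorelSpace G] [TopologicalSpace X] [CompactSpace X]
  [MeasurableSpace X] [BorelSpace X] [MulAction G X] [ContinuousSMul G X]

/-- The average of the laws at times `0, …, n` of the random walk with step law `μ` started at
`x`. -/
def empiricalMeasure (μ : Measure G) (n : ℕ) (x : X) : Measure X :=
  ((n + 1 : ℕ) : ENNReal)⁻¹ • ∑ k ∈ Finset.range (n + 1), (convPow μ k).map (· • x)

variable [ContinuousMul G] {μ : Measure G} [IsProbabilityMeasure μ] {f : X → ℝ}

instance isProbabilityMeasure_map_convPow_smul (k : ℕ) (x : X) :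
    IsProbabilityMeasure ((convPow μ k).map (· • x)) :=
  Measure.isProbabilityMeasure_map (by fun_prop)

instance isProbabilityMeasure_empiricalMeasure (n : ℕ) (x : X) :
    IsProbabilityMeasure (empiricalMeasure μ n x) := by
  constructor
  simp only [empiricalMeasure, Measure.smul_apply, Measure.finsetSum_apply, measure_univ,
    Finset.sum_const, Finset.card_range, smul_eq_mul, nsmul_eq_mul, mul_one]
  exact ENNReal.inv_mul_cancel (by simp) (ENNReal.natCast_ne_top _)

lemma integral_empiricalMeasure (hf : Continuous f) (n : ℕ) (x : X) :
    ∫ y, f y ∂empiricalMeasure μ n x =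
      ((n + 1 : ℕ) : ℝ)⁻¹ * ∑ k ∈ Finset.range (n + 1), ∫ g, f (g • x) ∂convPow μ k := by
  rw [empiricalMeasure, integral_smul_measure, integral_finsetSum_measure fun k _ =>
    (IsCompactlySupported.of_compactSpace _).integrable hf, ENNReal.toReal_inv,
    ENNReal.toReal_natCast, smul_eq_mul]
  congr 1
  refine Finset.sum_congr rfl fun k _ => ?_
  exact integral_map (by fun_prop) hf.aestronglyMeasurable

lemma integral_empiricalMeasure_of_telescoping (hf : Continuous f) {x : X} {u : ℕ → ℝ}
    (hu : ∀ k, ∫ g, f (g • x) ∂convPow μ k = u (k + 1) - u k) (n : ℕ) :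
    ∫ y, f y ∂empiricalMeasure μ n x = (u (n + 1) - u 0) / (n + 1 : ℕ) := by
  simp only [integral_empiricalMeasure hf, hu, Finset.sum_range_sub, div_eq_inv_mul]

variable [T2Space X]

lemma integral_integral_smul_sub_empiricalMeasure [T2Space G] [SecondCountableTopology X]
    (hμ : IsCompactlySupported μ) (hf : Continuous f) (n : ℕ) (x : X) :
    ∫ y, ∫ g, f (g • y) ∂μ ∂empiricalMeasure μ n x - ∫ y, f y ∂empiricalMeasure μ n x =
      (∫ g, f (g • x) ∂convPow μ (n + 1) - f x) / (n + 1 : ℕ) := by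
  have hf' : Continuous fun y => ∫ g, f (g • y) ∂μ := hμ.continuous_integral (by fun_prop)
  have hstep (k : ℕ) : ∫ h, ((∫ g, f (g • h • x) ∂μ) - f (h • x)) ∂convPow μ k =
      ∫ g, f (g • x) ∂convPow μ (k + 1) - ∫ g, f (g • x) ∂convPow μ k := by
    rw [integral_sub (f := fun h => ∫ g, f (g • h • x) ∂μ)
      ((hμ.convPow k).integrable (hf'.comp (continuous_id.smul continuous_const)))
      ((hμ.convPow k).integrable (by fun_prop)), add_comm k 1,
      hμ.integral_convPow_add (f := fun g => f (g • x)) (by fun_prop), convPow_one]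
    simp only [mul_smul]
  rw [← integral_sub ((IsCompactlySupported.of_compactSpace _).integrable hf')
    ((IsCompactlySupported.of_compactSpace _).integrable hf)]
  refine (integral_empiricalMeasure_of_telescoping (u := fun k => ∫ g, f (g • x) ∂convPow μ k)
    (hf'.sub hf) hstep n).trans ?_
  simp [convPow]

lemma isStationaryMeasure_of_tendsto_empiricalMeasure [T2Space G] [SecondCountableTopology X]
    (hμ : IsCompactlySupported μ) {x : ℕ → X} {l : Filter ℕ} [l.NeBot] (hl : l ≤ atTop)
    {η : Measure X} [IsProbabilityMeasure η]
    (hη : ∀ f : X → ℝ, Continuous f →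
      Tendsto (fun n => ∫ y, f y ∂empiricalMeasure μ n (x n)) l (nhds (∫ y, f y ∂η))) :
    IsStationaryMeasure μ η := by
  refine isStationaryMeasure_of_forall_integral_eq fun f hf => ?_
  obtain ⟨C, hC⟩ := isCompact_univ.exists_bound_of_continuousOn hf.continuousOn
  have hfC (y : X) : ‖f y‖ ≤ C := hC y (Set.mem_univ y)
  have hf' : Continuous fun y => ∫ g, f (g • y) ∂μ := hμ.continuous_integral (by fun_prop)
  have hzero : Tendsto (fun n : ℕ => ∫ y, ∫ g, f (g • y) ∂μ ∂empiricalMeasure μ n (x n) -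
      ∫ y, f y ∂empiricalMeasure μ n (x n)) atTop (nhds 0) := by
    refine squeeze_zero_norm (a := fun n : ℕ => (C + C) / (n + 1 : ℕ)) (fun n => ?_)
      (tendsto_const_nhds.div_atTop (tendsto_natCast_atTop_atTop.comp (tendsto_add_atTop_nat 1)))
    rw [integral_integral_smul_sub_empiricalMeasure hμ hf, norm_div, Real.norm_natCast]
    gcongr
    refine (norm_sub_le _ _).trans (add_le_add ?_ (hfC _))
    simpa using norm_integral_le_of_norm_le_const (μ := convPow μ (n + 1))
      (ae_of_all _ fun g => hfC (g • x n))
  exact (sub_eq_zero.1 <| tendsto_nhds_unique ((hη _ hf').sub (hη _ hf)) (hzero.mono_left hl)).symm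

lemma exists_tendsto_integral_hyperfilter {X : Type*} [TopologicalSpace X] [CompactSpace X]
    [T2Space X] [SecondCountableTopology X] [MeasurableSpace X] [BorelSpace X] (ν : ℕ → Measure X)
    [∀ n, IsProbabilityMeasure (ν n)] :
    ∃ η : Measure X, IsProbabilityMeasure η ∧ ∀ f : X → ℝ, Continuous f →
      Tendsto (fun n => ∫ x, f x ∂ν n) (hyperfilter ℕ) (nhds (∫ x, f x ∂η)) := by
  let P (n : ℕ) : ProbabilityMeasure X := ⟨ν n, inferInstance⟩
  let η := ((hyperfilter ℕ).map P).lim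
  have hη : Tendsto P (hyperfilter ℕ) (nhds η) := ((hyperfilter ℕ).map P).le_nhds_lim
  exact ⟨η, inferInstance, fun f hf =>
    ProbabilityMeasure.tendsto_iff_forall_integral_tendsto.1 hη (.mkOfCompact ⟨f, hf⟩)⟩

end KrylovBogoliubov

section Drift

/-- A continuous additive cocycle over an action. -/
structure IsCocycle {G X : Type*} [Monoid G] [MulAction G X] [TopologicalSpace G]
    [TopologicalSpace X] (σ : G → X → ℝ) : Prop where
  continuous : Continuous (Function.uncurry σ)
  map_mul : ∀ g h x, σ (g * h) x = σ g (h • x) + σ h x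

/-- The expected value of a cocycle `σ` along one step of law `μ` from `x`. -/
def drift {G X : Type*} [MeasurableSpace G] (σ : G → X → ℝ) (μ : Measure G) (x : X) : ℝ :=
  ∫ g, σ g x ∂μ

namespace IsCocycle

section Basic

variable {G X : Type*} [Monoid G] [MulAction G X] [TopologicalSpace G] [TopologicalSpace X]
  {σ : G → X → ℝ}

lemma isSubcocycle_neg (hσ : IsCocycle σ) : IsSubcocycle fun g x => -σ g x where
  continuous := hσ.continuous.neg
  map_mul_le g h x := by rw [hσ.map_mul, neg_add]

lemma map_one (hσ : IsCocycle σ) (x : X) : σ 1 x = 0 := by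
  simpa using hσ.map_mul 1 1 x

variable [MeasurableSpace G] {μ : Measure G}

lemma continuous_drift [OpensMeasurableSpace G] [IsFiniteMeasure μ] [FirstCountableTopology X]
    [LocallyCompactSpace X] (hσ : IsCocycle σ) (hμ : IsCompactlySupported μ) :
    Continuous (drift σ μ) :=
  hμ.continuous_integral (hσ.continuous.comp continuous_swap)

lemma drift_convPow_zero [MeasurableSingletonClass G] (hσ : IsCocycle σ) (x : X) :
    drift σ (convPow μ 0) x = 0 := by
  simp [drift, convPow, hσ.map_one]

end Basic

variable {G X : Type*} [Monoid G] [TopologicalSpace G] [ContinuousMul G] [T2Space G]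
  [SecondCountableTopology G] [MeasurableSpace G] [BorelSpace G] [TopologicalSpace X]
  [CompactSpace X] [T2Space X] [SecondCountableTopology X] [MulAction G X] [ContinuousSMul G X]
  {μ : Measure G} [IsProbabilityMeasure μ] {σ : G → X → ℝ}

lemma integral_drift_smul (hσ : IsCocycle σ) (hμ : IsCompactlySupported μ) (m n : ℕ) (x : X) :
    ∫ h, drift σ (convPow μ m) (h • x) ∂convPow μ n =
      drift σ (convPow μ (m + n)) x - drift σ (convPow μ n) x := by
  have hcont := hσ.continuous
  have hdrift := hσ.continuous_drift (hμ.convPow m)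
  have hsplit (h : G) : ∫ g, σ (g * h) x ∂convPow μ m =
      drift σ (convPow μ m) (h • x) + σ h x := by
    simp only [hσ.map_mul]
    rw [integral_add ((hμ.convPow m).integrable (by fun_prop)) (integrable_const _),
      integral_const, probReal_univ, one_smul]
    rfl
  rw [drift, hμ.integral_convPow_add (by fun_prop)]
  simp only [hsplit]
  rw [integral_add ((hμ.convPow n).integrable (by fun_prop))
    ((hμ.convPow n).integrable (by fun_prop))]
  exact (add_sub_cancel_right _ _).symm

lemma integral_drift_convPow [MeasurableSpace X] [BorelSpace X] {η : Measure X}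
    [IsProbabilityMeasure η] (hσ : IsCocycle σ) (hμ : IsCompactlySupported μ)
    (hη : IsStationaryMeasure μ η) (n : ℕ) :
    ∫ x, drift σ (convPow μ n) x ∂η = n * ∫ x, drift σ μ x ∂η := by
  have hint (ν : Measure G) [IsProbabilityMeasure ν] (hν : IsCompactlySupported ν) :
      Integrable (drift σ ν) η :=
    (IsCompactlySupported.of_compactSpace η).integrable (hσ.continuous_drift hν)
  induction n with
  | zero => simp [hσ.drift_convPow_zero]
  | succ n ih =>
    have hstep := hη.integral_eq (hσ.continuous_drift (hμ.convPow n))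
    have hsmul := hσ.integral_drift_smul hμ n 1
    simp only [convPow_one] at hsmul
    simp only [hsmul] at hstep
    rw [integral_sub (hint _ (hμ.convPow (n + 1))) (hint μ hμ), ih] at hstep
    push_cast
    linarith

lemma drift_convPow_le (hσ : IsCocycle σ) (hμ : IsCompactlySupported μ) {M : ℝ}
    (hM : ∀ x, drift σ μ x ≤ M) (n : ℕ) (x : X) : drift σ (convPow μ n) x ≤ n * M := by
  induction n with
  | zero => simp [hσ.drift_convPow_zero]
  | succ n ih =>
    have hint : ∫ h, drift σ μ (h • x) ∂convPow μ n ≤ M := by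
      have hdrift := hσ.continuous_drift hμ
      calc ∫ h, drift σ μ (h • x) ∂convPow μ n
        _ ≤ ∫ _, M ∂convPow μ n := integral_mono ((hμ.convPow n).integrable (by fun_prop))
            (integrable_const M) fun h => hM _
        _ = M := by rw [integral_const, probReal_univ, one_smul]
    have hstep := hσ.integral_drift_smul hμ 1 n x
    rw [convPow_one, add_comm 1 n] at hstep
    push_cast
    linarith

lemma exists_minimal_drift [Nonempty X] (hσ : IsCocycle σ) (hμ : IsCompactlySupported μ) :
    ∃ β : ℝ, (∀ ε > 0, ∀ᶠ n : ℕ in atTop, ∀ x, n * (β - ε) ≤ drift σ (convPow μ n) x) ∧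
      ∃ x : ℕ → X, Tendsto (fun n => drift σ (convPow μ n) (x n) / n) atTop (nhds β) := by
  have hcont (n : ℕ) := hσ.continuous_drift (hμ.convPow n)
  have hmin (n : ℕ) : ∃ x, ∀ y, drift σ (convPow μ n) x ≤ drift σ (convPow μ n) y := by
    obtain ⟨x, -, hx⟩ := isCompact_univ.exists_isMinOn Set.univ_nonempty (hcont n).continuousOn
    exact ⟨x, fun y => hx (Set.mem_univ y)⟩
  choose x hx using hmin
  have hsub : Subadditive fun n => -drift σ (convPow μ n) (x n) := fun m n => by
    have hm : drift σ (convPow μ m) (x m) ≤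
        ∫ h, drift σ (convPow μ m) (h • x (m + n)) ∂convPow μ n := by
      have hcontm := hcont m
      simpa using integral_mono (integrable_const (drift σ (convPow μ m) (x m)))
        ((hμ.convPow n).integrable (by fun_prop)) fun h => hx m (h • x (m + n))
    rw [hσ.integral_drift_smul hμ] at hm
    linarith [hx n (x (m + n))]
  obtain ⟨M, hM⟩ := isCompact_univ.exists_bound_of_continuousOn
    (hσ.continuous_drift hμ).continuousOn
  have hbdd : BddBelow (Set.range fun n : ℕ => -drift σ (convPow μ n) (x n) / n) := by
    refine ⟨-|M|, ?_⟩
    rintro _ ⟨n, rfl⟩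
    have hn := hσ.drift_convPow_le hμ (fun y => (le_abs_self _).trans <|
      (hM y (Set.mem_univ y)).trans (le_abs_self M)) n (x n)
    simp only [neg_div, neg_le_neg_iff]
    exact div_le_of_le_mul₀ n.cast_nonneg (abs_nonneg M) (by rwa [mul_comm])
  have hlim : Tendsto (fun n : ℕ => drift σ (convPow μ n) (x n) / n) atTop (nhds (-hsub.lim)) := by
    simpa only [neg_div, neg_neg] using (hsub.tendsto_lim hbdd).neg
  refine ⟨-hsub.lim, fun ε hε => ?_, x, hlim⟩
  filter_upwards [hlim.eventually_const_le (sub_lt_self _ hε), eventually_gt_atTop 0]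
    with n hn hn₀ y
  rw [le_div_iff₀ (by exact_mod_cast hn₀), mul_comm] at hn
  exact hn.trans (hx n y)

lemma exists_isStationaryMeasure [MeasurableSpace X] [BorelSpace X] (hσ : IsCocycle σ)
    (hμ : IsCompactlySupported μ) {β : ℝ} {x : ℕ → X}
    (hx : Tendsto (fun n => drift σ (convPow μ n) (x n) / n) atTop (nhds β)) :
    ∃ η : Measure X, IsProbabilityMeasure η ∧ IsStationaryMeasure μ η ∧
      ∫ y, drift σ μ y ∂η = β := by
  have hdrift := hσ.continuous_drift hμ
  obtain ⟨η, hη, hlim⟩ :=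
    exists_tendsto_integral_hyperfilter fun n => empiricalMeasure μ n (x (n + 1))
  refine ⟨η, hη, isStationaryMeasure_of_tendsto_empiricalMeasure hμ Nat.hyperfilter_le_atTop hlim,
    tendsto_nhds_unique (hlim _ hdrift) ?_⟩
  have hx' := hx.comp (tendsto_add_atTop_nat 1)
  refine (hx'.mono_left Nat.hyperfilter_le_atTop).congr fun n => ?_
  rw [integral_empiricalMeasure_of_telescoping (u := fun k => drift σ (convPow μ k) (x (n + 1)))
    hdrift fun k => ?_, hσ.drift_convPow_zero, sub_zero, Function.comp]
  have hk := hσ.integral_drift_smul hμ 1 k (x (n + 1))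
  rwa [convPow_one, add_comm 1 k] at hk

end IsCocycle

end Drift

section Deviations

lemma exists_seq_tendsto_ae_of_tendsto_integral {Ω : Type*} [MeasurableSpace Ω] {μ : Measure Ω}
    {f : ℕ → Ω → ℝ} (hf : ∀ n, Integrable (f n) μ) (hf₀ : ∀ n ω, 0 ≤ f n ω)
    (hlim : Tendsto (fun n => ∫ ω, f n ω ∂μ) atTop (nhds 0)) :
    ∃ ψ : ℕ → ℕ, StrictMono ψ ∧ ∀ᵐ ω ∂μ, Tendsto (fun n => f (ψ n) ω) atTop (nhds 0) := by
  have hnorm (n : ℕ) : eLpNorm (f n - fun _ => 0) 1 μ = ENNReal.ofReal (∫ ω, f n ω ∂μ) := by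
    rw [show f n - (fun _ => 0) = f n from sub_zero _, eLpNorm_one_eq_lintegral_enorm,
      ← ofReal_integral_norm_eq_lintegral_enorm (hf n)]
    simp only [Real.norm_of_nonneg (hf₀ n _)]
  refine (tendstoInMeasure_of_tendsto_eLpNorm (f := f) (g := fun _ => 0) one_ne_zero
    (fun n => (hf n).1) aestronglyMeasurable_const ?_).exists_seq_tendsto_ae
  simpa only [hnorm, ENNReal.ofReal_zero] using ENNReal.tendsto_ofReal hlim

/-- The expected amount by which a cocycle `σ` exceeds the level `b` after one step of law `μ`
from `x`. -/
def excess {G X : Type*} [MeasurableSpace G] (σ : G → X → ℝ) (b : ℝ) (μ : Measure G) (x : X) : ℝ :=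
  ∫ g, max (σ g x - b) 0 ∂μ

lemma excess_nonneg {G X : Type*} [MeasurableSpace G] (σ : G → X → ℝ) (b : ℝ) (μ : Measure G)
    (x : X) : 0 ≤ excess σ b μ x :=
  integral_nonneg fun _ => le_max_right _ _

lemma integral_max_sub_zero_le {Ω : Type*} [MeasurableSpace Ω] {μ : Measure Ω}
    [IsProbabilityMeasure μ] {s : Ω → ℝ} {b c t : ℝ} (hs : Integrable s μ)
    (hexp : Integrable (fun ω => Real.exp (t * -s ω)) μ) (ht : 0 < t) (hcb : c ≤ b)
    (hc : ∫ ω, Real.exp (t * -s ω) ∂μ ≤ Real.exp (-(t * c))) :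
    ∫ ω, max (s ω - b) 0 ∂μ ≤ ∫ ω, s ω ∂μ - c + 1 / t := by
  have hpointwise (ω : Ω) :
      max (s ω - b) 0 ≤ s ω + (Real.exp (t * c) / t * Real.exp (t * -s ω) - c) := by
    have hmul : Real.exp (t * c) / t * Real.exp (t * -s ω) = Real.exp (t * (c - s ω)) / t := by
      rw [div_mul_eq_mul_div, ← Real.exp_add, ← mul_add, sub_eq_add_neg]
    have hpos : 0 ≤ Real.exp (t * (c - s ω)) / t := by positivity
    have hlin : c - s ω ≤ Real.exp (t * (c - s ω)) / t := by
      rw [le_div_iff₀ ht]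
      linarith [Real.add_one_le_exp (t * (c - s ω))]
    rw [hmul]
    exact max_le (by linarith) (by linarith)
  have hexp' : Integrable (fun ω => Real.exp (t * c) / t * Real.exp (t * -s ω) - c) μ :=
    (hexp.const_mul _).sub (integrable_const c)
  calc ∫ ω, max (s ω - b) 0 ∂μ
    _ ≤ ∫ ω, (s ω + (Real.exp (t * c) / t * Real.exp (t * -s ω) - c)) ∂μ :=
        integral_mono (hs.sub (integrable_const b)).pos_part (hs.add hexp') hpointwise
    _ = ∫ ω, s ω ∂μ - c + Real.exp (t * c) / t * ∫ ω, Real.exp (t * -s ω) ∂μ := by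
        rw [integral_add hs hexp', integral_sub (hexp.const_mul _) (integrable_const c),
          integral_const_mul, integral_const, probReal_univ, one_smul]
        ring
    _ ≤ ∫ ω, s ω ∂μ - c + Real.exp (t * c) / t * Real.exp (-(t * c)) := by gcongr
    _ = ∫ ω, s ω ∂μ - c + 1 / t := by
        rw [div_mul_eq_mul_div, ← Real.exp_add, add_neg_cancel, Real.exp_zero]

namespace IsCocycle

lemma continuous_excess {G X : Type*} [Monoid G] [TopologicalSpace G] [MeasurableSpace G]
    [OpensMeasurableSpace G] [TopologicalSpace X] [FirstCountableTopology X]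
    [LocallyCompactSpace X] [MulAction G X] {μ : Measure G} [IsFiniteMeasure μ] {σ : G → X → ℝ}
    (hσ : IsCocycle σ) (hμ : IsCompactlySupported μ) (b : ℝ) : Continuous (excess σ b μ) := by
  have hcont := hσ.continuous
  exact hμ.continuous_integral (by fun_prop)

variable {G X : Type*} [Monoid G] [TopologicalSpace G] [ContinuousMul G] [T2Space G]
  [SecondCountableTopology G] [MeasurableSpace G] [BorelSpace G] [TopologicalSpace X]
  [CompactSpace X] [MulAction G X] {μ : Measure G} [IsProbabilityMeasure μ] {σ : G → X → ℝ} {β : ℝ}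

-- A uniform lower bound on the drift makes large downward deviations exponentially unlikely, so
-- the positive and the net deviations of the cocycle have nearly the same mean.
lemma exists_excess_le (hσ : IsCocycle σ) (hμ : IsCompactlySupported μ)
    (hβ : ∀ ε > 0, ∀ᶠ n : ℕ in atTop, ∀ x, n * (β - ε) ≤ drift σ (convPow μ n) x)
    {ε : ℝ} (hε : 0 < ε) :
    ∃ C, ∃ᶠ n : ℕ in atTop, ∀ x,
      excess σ (n * β) (convPow μ n) x ≤ drift σ (convPow μ n) x - n * β + n * ε + C := by
  have hcont := hσ.continuous
  obtain ⟨m, hm, hm₀⟩ := ((hβ (ε / 2) (half_pos hε)).and (eventually_gt_atTop 0)).exists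
  have hm₀' : (0 : ℝ) < m := by exact_mod_cast hm₀
  obtain ⟨t, ht, hexp⟩ := hσ.isSubcocycle_neg.exists_integral_exp_convPow_le (hμ.convPow m)
    (a := -(m * (β - ε / 2))) (b := -(m * (β - ε))) (by nlinarith) fun x => by
      rw [integral_neg]
      exact neg_le_neg (hm x)
  refine ⟨1 / t, frequently_atTop.2 fun N => ⟨m * (N + 1), by nlinarith, fun x => ?_⟩⟩
  generalize hn : m * (N + 1) = n
  have hμn := hμ.convPow n
  have hmoment : ∫ g, Real.exp (t * -σ g x) ∂convPow μ n ≤ Real.exp (-(t * (n * (β - ε)))) := by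
    have hNx := hexp N x
    rw [convPow_convPow, hn, ← Real.exp_nat_mul] at hNx
    convert hNx using 2
    rw [← hn]
    push_cast
    ring
  calc excess σ (n * β) (convPow μ n) x
    _ ≤ drift σ (convPow μ n) x - n * (β - ε) + 1 / t :=
        integral_max_sub_zero_le (hμn.integrable (by fun_prop)) (hμn.integrable (by fun_prop)) ht
          (mul_le_mul_of_nonneg_left (by linarith) n.cast_nonneg) hmoment
    _ = drift σ (convPow μ n) x - n * β + n * ε + 1 / t := by ring

variable [T2Space X] [SecondCountableTopology X] [ContinuousSMul G X] [MeasurableSpace X]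
  [BorelSpace X] {η : Measure X} [IsProbabilityMeasure η]

lemma frequently_integral_excess_le (hσ : IsCocycle σ) (hμ : IsCompactlySupported μ)
    (hβ : ∀ ε > 0, ∀ᶠ n : ℕ in atTop, ∀ x, n * (β - ε) ≤ drift σ (convPow μ n) x)
    (hη : IsStationaryMeasure μ η) (hηβ : ∫ x, drift σ μ x ∂η = β) {ε : ℝ} (hε : 0 < ε) :
    ∃ᶠ n : ℕ in atTop, ∫ x, excess σ (n * β) (convPow μ n) x / n ∂η ≤ ε := by
  obtain ⟨C, hC⟩ := hσ.exists_excess_le hμ hβ (half_pos hε)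
  have hlarge : ∀ᶠ n : ℕ in atTop, C ≤ n * (ε / 2) :=
    (tendsto_natCast_atTop_atTop.atTop_mul_const (half_pos hε)).eventually_ge_atTop C
  refine (hC.and_eventually (hlarge.and (eventually_gt_atTop 0))).mono ?_
  rintro n ⟨hn, hCn, hn₀⟩
  have hη' := IsCompactlySupported.of_compactSpace η
  have hdrift := hσ.continuous_drift (hμ.convPow n)
  have hn₀' : (0 : ℝ) < n := by exact_mod_cast hn₀
  rw [integral_div, div_le_iff₀ hn₀']
  calc ∫ x, excess σ (n * β) (convPow μ n) x ∂η
    _ ≤ ∫ x, (drift σ (convPow μ n) x - n * β + n * (ε / 2) + C) ∂η :=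
        integral_mono (hη'.integrable (hσ.continuous_excess (hμ.convPow n) _))
          (hη'.integrable (by fun_prop)) hn
    _ = n * (ε / 2) + C := by
        simp only [add_assoc, sub_eq_add_neg]
        rw [integral_add (hη'.integrable hdrift) (integrable_const _), integral_const,
          probReal_univ, one_smul, hσ.integral_drift_convPow hμ hη, hηβ]
        ring
    _ ≤ ε * n := by linarith

lemma exists_seq_tendsto_excess_div (hσ : IsCocycle σ) (hμ : IsCompactlySupported μ)
    (hβ : ∀ ε > 0, ∀ᶠ n : ℕ in atTop, ∀ x, n * (β - ε) ≤ drift σ (convPow μ n) x)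
    (hη : IsStationaryMeasure μ η) (hηβ : ∫ x, drift σ μ x ∂η = β) :
    ∃ φ : ℕ → ℕ, StrictMono φ ∧ ∀ᵐ x ∂η,
      Tendsto (fun j => excess σ (φ j * β) (convPow μ (φ j)) x / φ j) atTop (nhds 0) := by
  obtain ⟨φ, hφ, hle⟩ := extraction_forall_of_frequently fun j : ℕ =>
    hσ.frequently_integral_excess_le hμ hβ hη hηβ (Nat.one_div_pos_of_nat (n := j))
  have hnonneg (j : ℕ) (x : X) : 0 ≤ excess σ (φ j * β) (convPow μ (φ j)) x / φ j :=
    div_nonneg (excess_nonneg _ _ _ _) (Nat.cast_nonneg _)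
  obtain ⟨ψ, hψ, hlim⟩ := exists_seq_tendsto_ae_of_tendsto_integral (μ := η)
    (fun j => (IsCompactlySupported.of_compactSpace η).integrable <|
      (hσ.continuous_excess (hμ.convPow (φ j)) (φ j * β)).div_const _) hnonneg
    (squeeze_zero (fun j => integral_nonneg (hnonneg j)) hle
      tendsto_one_div_add_atTop_nhds_zero_nat)
  exact ⟨φ ∘ ψ, hφ.comp hψ, hlim⟩

end IsCocycle

end Deviations

section Contraction

lemma abs_integral_sub_integral_le {X : Type*} [MeasurableSpace X] {η₁ η₂ : Measure X}
    [IsProbabilityMeasure η₁] [IsProbabilityMeasure η₂] {φ : X → ℝ} (hφ₁ : Integrable φ η₁)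
    (hφ₂ : Integrable φ η₂) {ε : ℝ} (h : ∀ x y, |φ x - φ y| ≤ ε) :
    |∫ x, φ x ∂η₁ - ∫ y, φ y ∂η₂| ≤ ε := by
  have hinner (x : X) : φ x - ∫ y, φ y ∂η₂ = ∫ y, (φ x - φ y) ∂η₂ := by
    rw [integral_sub (integrable_const _) hφ₂, integral_const, probReal_univ, one_smul]
  have houter : ∫ x, φ x ∂η₁ - ∫ y, φ y ∂η₂ = ∫ x, ∫ y, (φ x - φ y) ∂η₂ ∂η₁ := by
    simp only [← hinner]
    rw [integral_sub hφ₁ (integrable_const _), integral_const, probReal_univ, one_smul]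
  have hbound (x : X) : ‖∫ y, (φ x - φ y) ∂η₂‖ ≤ ε := by
    simpa using norm_integral_le_of_norm_le_const (f := fun y => φ x - φ y) (ae_of_all η₂ (h x))
  rw [houter, ← Real.norm_eq_abs]
  simpa using norm_integral_le_of_norm_le_const (ae_of_all η₁ hbound)

lemma exists_abs_sub_le_add_mul {X : Type*} [TopologicalSpace X] [CompactSpace X] {D : X → X → ℝ}
    (hD : Continuous (Function.uncurry D)) (hD₀ : ∀ x y, 0 ≤ D x y)
    (hD_eq : ∀ x y, D x y = 0 → x = y) {f : X → ℝ} (hf : Continuous f) {ε : ℝ} (hε : 0 < ε) :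
    ∃ C, 0 ≤ C ∧ ∀ x y, |f x - f y| ≤ ε + C * D x y := by
  let far : Set (X × X) := {p | ε ≤ |f p.1 - f p.2|}
  have hfar : IsCompact far := (isClosed_le (by fun_prop) (by fun_prop)).isCompact
  have hpos : ∀ p ∈ far, 0 < D p.1 p.2 := fun p hp => (hD₀ _ _).lt_of_ne' fun h => by
    have hp' : ε ≤ |f p.1 - f p.2| := hp
    rw [hD_eq _ _ h, sub_self, abs_zero] at hp'
    exact hε.not_ge hp'
  obtain ⟨C, hC⟩ := hfar.bddAbove_image (f := fun p => |f p.1 - f p.2| / D p.1 p.2)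
    ((by fun_prop : Continuous fun p : X × X => |f p.1 - f p.2|).continuousOn.div
      hD.continuousOn fun p hp => (hpos p hp).ne')
  refine ⟨max C 0, le_max_right _ _, fun x y => ?_⟩
  have hCD : 0 ≤ max C 0 * D x y := mul_nonneg (le_max_right _ _) (hD₀ x y)
  rcases lt_or_ge |f x - f y| ε with hnear | hxy
  · linarith
  · have hle := (hC ⟨(x, y), hxy, rfl⟩).trans (le_max_left C 0)
    linarith [(div_le_iff₀ (hpos (x, y) hxy)).1 hle]

lemma abs_integral_sub_integral_le_add_mul {Ω : Type*} [MeasurableSpace Ω] {μ : Measure Ω}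
    [IsProbabilityMeasure μ] {u v D : Ω → ℝ} (hu : Integrable u μ) (hv : Integrable v μ)
    (hD : Integrable D μ) {a C : ℝ} (h : ∀ ω, |u ω - v ω| ≤ a + C * D ω) :
    |∫ ω, u ω ∂μ - ∫ ω, v ω ∂μ| ≤ a + C * ∫ ω, D ω ∂μ := by
  rw [← integral_sub hu hv]
  calc |∫ ω, (u ω - v ω) ∂μ|
    _ ≤ ∫ ω, |u ω - v ω| ∂μ := abs_integral_le_integral_abs
    _ ≤ ∫ ω, (a + C * D ω) ∂μ :=
        integral_mono (hu.sub hv).abs ((integrable_const _).add (hD.const_mul C)) h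
    _ = a + C * ∫ ω, D ω ∂μ := by
        rw [integral_add (integrable_const _) (hD.const_mul C), integral_const_mul,
          integral_const, probReal_univ, one_smul]

lemma IsStationaryMeasure.eq_of_contracting {G X : Type*} [Monoid G] [TopologicalSpace G]
    [ContinuousMul G] [T2Space G] [SecondCountableTopology G] [MeasurableSpace G] [BorelSpace G]
    [TopologicalSpace X] [CompactSpace X] [T2Space X] [SecondCountableTopology X]
    [MeasurableSpace X] [BorelSpace X] [MulAction G X] [ContinuousSMul G X] {μ : Measure G}
    [IsProbabilityMeasure μ] (hμ : IsCompactlySupported μ) {D : X → X → ℝ}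
    (hD : Continuous (Function.uncurry D)) (hD₀ : ∀ x y, 0 ≤ D x y)
    (hD_eq : ∀ x y, D x y = 0 → x = y)
    (hcontr : ∀ ε > 0, ∃ n, ∀ x y, ∫ g, D (g • x) (g • y) ∂convPow μ n ≤ ε)
    {η₁ η₂ : Measure X} [IsProbabilityMeasure η₁] [IsProbabilityMeasure η₂]
    (hη₁ : IsStationaryMeasure μ η₁) (hη₂ : IsStationaryMeasure μ η₂) : η₁ = η₂ := by
  refine ext_of_forall_integral_eq_of_IsFiniteMeasure fun f => eq_of_abs_sub_nonpos <|
    le_of_forall_pos_le_add fun ε hε => ?_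
  rw [zero_add]
  have hf := f.continuous
  obtain ⟨C, hC₀, hC⟩ := exists_abs_sub_le_add_mul hD hD₀ hD_eq hf (half_pos hε)
  obtain ⟨n, hn⟩ := hcontr (ε / 2 / (C + 1)) (by positivity)
  have hμn := hμ.convPow n
  have hDg (x y : X) : Continuous fun g : G => D (g • x) (g • y) :=
    hD.comp (f := fun g : G => (g • x, g • y)) (by fun_prop)
  have hosc (x y : X) :
      |∫ g, f (g • x) ∂convPow μ n - ∫ g, f (g • y) ∂convPow μ n| ≤ ε :=
    calc |∫ g, f (g • x) ∂convPow μ n - ∫ g, f (g • y) ∂convPow μ n|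
      _ ≤ ε / 2 + C * ∫ g, D (g • x) (g • y) ∂convPow μ n :=
          abs_integral_sub_integral_le_add_mul (hμn.integrable (by fun_prop))
            (hμn.integrable (by fun_prop)) (hμn.integrable (hDg x y)) fun _ => hC _ _
      _ ≤ ε / 2 + C * (ε / 2 / (C + 1)) := by
          gcongr
          exact hn x y
      _ ≤ ε / 2 + (C + 1) * (ε / 2 / (C + 1)) := by
          gcongr
          linarith
      _ = ε := by field_simp; ring
  have hφ : Continuous fun x => ∫ g, f (g • x) ∂convPow μ n :=
    hμn.continuous_integral (by fun_prop)
  rw [hη₁.integral_eq_convPow hμ hf n, hη₂.integral_eq_convPow hμ hf n]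
  exact abs_integral_sub_integral_le ((IsCompactlySupported.of_compactSpace η₁).integrable hφ)
    ((IsCompactlySupported.of_compactSpace η₂).integrable hφ) hosc

end Contraction

section Area

variable {E F : Type*} [NormedAddCommGroup E] [InnerProductSpace ℝ E] [NormedAddCommGroup F]
  [InnerProductSpace ℝ F]

/-- The area of the parallelogram spanned by `x` and `y`, that is `‖x ∧ y‖`. -/
def area (x y : E) : ℝ :=
  Real.sqrt (‖x‖ ^ 2 * ‖y‖ ^ 2 - (inner ℝ x y) ^ 2)

lemma area_le_norm_mul_norm (x y : E) : area x y ≤ ‖x‖ * ‖y‖ := by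
  rw [area, Real.sqrt_le_left (by positivity)]
  nlinarith [sq_nonneg (inner ℝ x y)]

lemma area_eq_norm_mul_norm {x y : E} (h : inner ℝ x y = 0) : area x y = ‖x‖ * ‖y‖ := by
  rw [area, h, zero_pow two_ne_zero, sub_zero, ← mul_pow, Real.sqrt_sq (by positivity)]

lemma continuous_area : Continuous (Function.uncurry (area : E → E → ℝ)) := by
  unfold area
  fun_prop

lemma area_comm (x y : E) : area x y = area y x := by
  rw [area, area, real_inner_comm, mul_comm]

lemma area_smul_add_smul_right (x y : E) (a b : ℝ) : area x (a • x + b • y) = |b| * area x y := by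
  rw [area, area, ← Real.sqrt_sq_eq_abs, ← Real.sqrt_mul (sq_nonneg b)]
  congr 1
  simp only [← real_inner_self_eq_norm_sq, inner_add_left, inner_add_right, real_inner_smul_left,
    real_inner_smul_right, real_inner_comm x y]
  ring

lemma area_smul_right (x y : E) (b : ℝ) : area x (b • y) = |b| * area x y := by
  simpa using area_smul_add_smul_right x y 0 b

lemma area_smul_left (x y : E) (a : ℝ) : area (a • x) y = |a| * area x y := by
  rw [area_comm, area_smul_right, area_comm]

lemma area_smul_add_right (x y : E) (a : ℝ) : area x (a • x + y) = area x y := by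
  simpa using area_smul_add_smul_right x y a 1

lemma area_eq_zero_iff {x y : E} (hx : x ≠ 0) (hy : y ≠ 0) : area x y = 0 ↔ ∃ a : ℝ, a • x = y := by
  constructor
  · intro h
    have hsq : (inner ℝ x y) ^ 2 ≤ (‖x‖ * ‖y‖) ^ 2 :=
      sq_le_sq' (neg_le_of_abs_le (abs_real_inner_le_norm x y)) (real_inner_le_norm x y)
    rw [area, ← mul_pow, Real.sqrt_eq_zero (sub_nonneg.2 hsq), sub_eq_zero, eq_comm,
      sq_eq_sq_iff_abs_eq_abs, abs_of_nonneg (mul_nonneg (norm_nonneg x) (norm_nonneg y))] at h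
    obtain ⟨a, -, ha⟩ := (norm_inner_eq_norm_iff (𝕜 := ℝ) hx hy).1 h
    exact ⟨a, ha.symm⟩
  · rintro ⟨a, rfl⟩
    simpa using area_smul_add_smul_right x 0 a 0

lemma area_map_le {A : E →ₗ[ℝ] F} {N : ℝ}
    (hN : ∀ p q, ‖p‖ = 1 → ‖q‖ = 1 → inner ℝ p q = 0 → area (A p) (A q) ≤ N) (x y : E) :
    area (A x) (A y) ≤ N * area x y := by
  -- Both sides only depend on the component `w` of `y` orthogonal to `x`.
  rcases eq_or_ne x 0 with rfl | hx
  · simp [area]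
  obtain ⟨a, w, hxw, rfl⟩ : ∃ (a : ℝ) (w : E), inner ℝ x w = 0 ∧ a • x + w = y := by
    refine ⟨inner ℝ x y / ‖x‖ ^ 2, y - (inner ℝ x y / ‖x‖ ^ 2) • x, ?_, add_sub_cancel _ _⟩
    rw [inner_sub_right, real_inner_smul_right, real_inner_self_eq_norm_sq,
      div_mul_cancel₀ _ (pow_ne_zero 2 (norm_ne_zero_iff.2 hx)), sub_self]
  rw [map_add, map_smul, area_smul_add_right, area_smul_add_right, area_eq_norm_mul_norm hxw]
  rcases eq_or_ne w 0 with rfl | hw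
  · simp [area]
  have hunit := hN (‖x‖⁻¹ • x) (‖w‖⁻¹ • w) (norm_smul_inv_norm hx) (norm_smul_inv_norm hw)
    (by rw [real_inner_smul_left, real_inner_smul_right, hxw, mul_zero, mul_zero])
  have hxpos := norm_pos_iff.2 hx
  have hwpos := norm_pos_iff.2 hw
  rw [map_smul, map_smul, area_smul_left, area_smul_right, abs_of_pos (inv_pos.2 hxpos),
    abs_of_pos (inv_pos.2 hwpos), ← mul_assoc, ← mul_inv, inv_mul_le_iff₀ (by positivity)] at hunit
  linarith

end Area

section ProjectiveAction

lemma glCLM_one : glCLM (1 : GLd d) = 1 := by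
  simp [glCLM]

lemma glCLM_mul (g h : GLd d) : glCLM (g * h) = glCLM g * glCLM h := by
  simp [glCLM]

lemma glCLM_mul_apply (g h : GLd d) (v : Ed d) : glCLM (g * h) v = glCLM g (glCLM h v) := by
  rw [glCLM_mul, mul_apply_eq_comp]

lemma glCLM_ne_zero (g : GLd d) {v : Ed d} (hv : v ≠ 0) : glCLM g v ≠ 0 :=
  (map_ne_zero_iff (glCLM g).toLinearMap (glLinear_injective g)).2 hv

lemma continuous_glCLM : Continuous (glCLM : GLd d → (Ed d →L[ℝ] Ed d)) :=
  (LinearMap.continuous_of_finiteDimensional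
    (Matrix.toEuclideanCLM (n := Fin d) (𝕜 := ℝ)).toAlgEquiv.toLinearMap).comp Units.continuous_val

instance : SecondCountableTopology (GLd d) := by
  have : SecondCountableTopology (Matrix (Fin d) (Fin d) ℝ) :=
    inferInstanceAs (SecondCountableTopology (Fin d → Fin d → ℝ))
  have : SecondCountableTopology (Matrix (Fin d) (Fin d) ℝ)ᵐᵒᵖ :=
    MulOpposite.opHomeomorph.symm.isEmbedding.secondCountableTopology
  exact Units.isEmbedding_embedProduct.secondCountableTopology

lemma isOpenQuotientMap_mk' : IsOpenQuotientMap (Projectivization.mk' ℝ : _ → Pd d) := by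
  have hquot : Topology.IsQuotientMap (Projectivization.mk' ℝ : _ → Pd d) :=
    isQuotientMap_quotient_mk'
  refine IsOpenQuotientMap.iff_isOpenMap_isQuotientMap.2 ⟨fun U hU => ?_, hquot⟩
  let scale (a : ℝˣ) (v : {v : Ed d // v ≠ 0}) : {v : Ed d // v ≠ 0} :=
    ⟨a • v.1, (smul_ne_zero_iff_ne a).2 v.2⟩
  have hpreimage : Projectivization.mk' ℝ ⁻¹' (Projectivization.mk' ℝ '' U) =
      ⋃ a : ℝˣ, scale a ⁻¹' U := by
    ext v
    simp only [Set.mem_preimage, Set.mem_image, Set.mem_iUnion, Projectivization.mk'_eq_mk,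
      Projectivization.mk_eq_mk_iff]
    constructor
    · rintro ⟨w, hw, a, ha⟩
      exact ⟨a, (Subtype.ext ha : scale a v = w) ▸ hw⟩
    · rintro ⟨a, ha⟩
      exact ⟨_, ha, a, rfl⟩
  rw [← hquot.isOpen_preimage, hpreimage]
  exact isOpen_iUnion fun a => hU.preimage (by fun_prop)

lemma area_eq_zero_iff_mk_eq_mk {v w : Ed d} (hv : v ≠ 0) (hw : w ≠ 0) :
    area v w = 0 ↔ Projectivization.mk ℝ v hv = Projectivization.mk ℝ w hw := by
  rw [area_eq_zero_iff hv hw, eq_comm (a := Projectivization.mk ℝ v hv),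
    Projectivization.mk_eq_mk_iff']

instance : T2Space (Pd d) := by
  rw [t2_iff_isClosed_diagonal,
    ← (isOpenQuotientMap_mk'.prodMap isOpenQuotientMap_mk').isQuotientMap.isClosed_preimage]
  have hdiagonal : Prod.map (Projectivization.mk' ℝ) (Projectivization.mk' ℝ) ⁻¹'
      Set.diagonal (Pd d) = {p | area p.1.1 p.2.1 = 0} := by
    ext p
    exact (area_eq_zero_iff_mk_eq_mk p.1.2 p.2.2).symm
  rw [hdiagonal]
  exact isClosed_eq (continuous_area.comp (f := fun p : {v : Ed d // v ≠ 0} × {v : Ed d // v ≠ 0} =>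
    (p.1.1, p.2.1)) (by fun_prop)) continuous_const

instance : SecondCountableTopology (Pd d) :=
  isOpenQuotientMap_mk'.isQuotientMap.secondCountableTopology isOpenQuotientMap_mk'.isOpenMap

instance : CompactSpace (Pd d) := by
  let line (x : Metric.sphere (0 : Ed d) 1) : Pd d :=
    Projectivization.mk' ℝ ⟨x, ne_zero_of_mem_unit_sphere x⟩
  have hline : Function.Surjective line := fun p => by
    induction p using Projectivization.ind with
    | h v hv =>
      exact ⟨⟨‖v‖⁻¹ • v, mem_sphere_zero_iff_norm.2 (norm_smul_inv_norm hv)⟩,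
        (Projectivization.mk_eq_mk_iff' ℝ _ _ _ _).2 ⟨‖v‖⁻¹, rfl⟩⟩
  exact hline.compactSpace (isOpenQuotientMap_mk'.continuous.comp (by fun_prop))

lemma pact_mk (g : GLd d) {v : Ed d} (hv : v ≠ 0) :
    pact g (Projectivization.mk ℝ v hv) = Projectivization.mk ℝ (glCLM g v) (glCLM_ne_zero g hv) :=
  Projectivization.map_mk _ _ _ _

instance : MulAction (GLd d) (Pd d) where
  smul := pact
  one_smul p := by
    induction p using Projectivization.ind with
    | h v hv => exact (pact_mk 1 hv).trans (by simp only [glCLM_one, one_apply_eq_self])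
  mul_smul g h p := by
    induction p using Projectivization.ind with
    | h v hv =>
      change pact _ _ = pact _ (pact _ _)
      simp only [pact_mk, glCLM_mul_apply]

lemma smul_mk (g : GLd d) {v : Ed d} (hv : v ≠ 0) :
    g • Projectivization.mk ℝ v hv = Projectivization.mk ℝ (glCLM g v) (glCLM_ne_zero g hv) :=
  pact_mk g hv

lemma continuous_glCLM_apply : Continuous fun p : GLd d × Ed d => glCLM p.1 p.2 :=
  (continuous_glCLM.comp continuous_fst).clm_apply continuous_snd

instance : ContinuousSMul (GLd d) (Pd d) where
  continuous_smul := by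
    rw [← (IsOpenQuotientMap.id.prodMap isOpenQuotientMap_mk').continuous_comp_iff]
    have hlift : Continuous fun p : GLd d × {v : Ed d // v ≠ 0} =>
        (⟨glCLM p.1 p.2.1, glCLM_ne_zero p.1 p.2.2⟩ : {v : Ed d // v ≠ 0}) :=
      (continuous_glCLM_apply.comp (f := fun p : GLd d × {v : Ed d // v ≠ 0} => (p.1, p.2.1))
        (by fun_prop)).subtype_mk _
    exact isOpenQuotientMap_mk'.continuous.comp hlift

end ProjectiveAction

section ProjectiveContraction

/-- The logarithmic norm cocycle `(g, v̂) ↦ log (‖g v‖ / ‖v‖)` on projective space. -/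
def normCocycle (g : GLd d) (x : Pd d) : ℝ :=
  Real.log (‖glCLM g x.rep‖ / ‖x.rep‖)

lemma normCocycle_mk (g : GLd d) {v : Ed d} (hv : v ≠ 0) :
    normCocycle g (Projectivization.mk ℝ v hv) = Real.log (‖glCLM g v‖ / ‖v‖) := by
  obtain ⟨a, ha⟩ := Projectivization.exists_smul_eq_mk_rep ℝ v hv
  rw [normCocycle, ← ha, Units.smul_def, map_smul, norm_smul, norm_smul,
    mul_div_mul_left _ _ (norm_ne_zero_iff.2 a.ne_zero)]

lemma isCocycle_normCocycle : IsCocycle (normCocycle : GLd d → Pd d → ℝ) where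
  continuous := by
    rw [← (IsOpenQuotientMap.id.prodMap isOpenQuotientMap_mk').continuous_comp_iff]
    have hlift : Continuous fun p : GLd d × {v : Ed d // v ≠ 0} =>
        Real.log (‖glCLM p.1 p.2.1‖ / ‖p.2.1‖) := by
      refine Continuous.log (Continuous.div ?_ (by fun_prop) fun p => norm_ne_zero_iff.2 p.2.2)
        fun p => div_ne_zero (norm_ne_zero_iff.2 (glCLM_ne_zero p.1 p.2.2))
          (norm_ne_zero_iff.2 p.2.2)
      exact (continuous_glCLM_apply.comp (f := fun p : GLd d × {v : Ed d // v ≠ 0} => (p.1, p.2.1))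
        (by fun_prop)).norm
    exact hlift.congr fun p => (normCocycle_mk p.1 p.2.2).symm
  map_mul g h x := by
    induction x using Projectivization.ind with
    | h v hv =>
      have hv' := norm_ne_zero_iff.2 hv
      have hhv := norm_ne_zero_iff.2 (glCLM_ne_zero h hv)
      have hghv := norm_ne_zero_iff.2 (glCLM_ne_zero g (glCLM_ne_zero h hv))
      rw [smul_mk, normCocycle_mk, normCocycle_mk, normCocycle_mk, glCLM_mul_apply,
        ← Real.log_mul (div_ne_zero hghv hhv) (div_ne_zero hhv hv'), div_mul_div_cancel₀ hhv]

lemma exists_orthonormal_pair (hd : 2 ≤ d) :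
    ∃ p q : Ed d, ‖p‖ = 1 ∧ ‖q‖ = 1 ∧ inner ℝ p q = 0 :=
  ⟨EuclideanSpace.single ⟨0, by lia⟩ 1, EuclideanSpace.single ⟨1, by lia⟩ 1, by simp, by simp,
    by simp [EuclideanSpace.inner_single_left]⟩

lemma continuous_area_glCLM :
    Continuous fun p : GLd d × Ed d × Ed d => area (glCLM p.1 p.2.1) (glCLM p.1 p.2.2) :=
  continuous_area.comp <|
    (continuous_glCLM_apply.comp (f := fun p : GLd d × Ed d × Ed d => (p.1, p.2.1))
      (by fun_prop)).prodMk
    (continuous_glCLM_apply.comp (f := fun p : GLd d × Ed d × Ed d => (p.1, p.2.2)) (by fun_prop))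

/-- The set of orthonormal pairs, over which `N2` is a supremum. -/
def orthonormalPairs (d : ℕ) : Set (Ed d × Ed d) :=
  {p | ‖p.1‖ = 1 ∧ ‖p.2‖ = 1 ∧ inner ℝ p.1 p.2 = 0}

lemma isCompact_orthonormalPairs : IsCompact (orthonormalPairs d) := by
  refine ((isCompact_sphere 0 1).prod (isCompact_sphere 0 1)).of_isClosed_subset
    (t := orthonormalPairs d) (s := Metric.sphere 0 1 ×ˢ Metric.sphere 0 1) ?_
    fun p hp => ⟨mem_sphere_zero_iff_norm.2 hp.1, mem_sphere_zero_iff_norm.2 hp.2.1⟩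
  exact (isClosed_eq (by fun_prop) continuous_const).inter
    ((isClosed_eq (by fun_prop) continuous_const).inter
      (isClosed_eq (by fun_prop) continuous_const))

lemma N2_eq_sSup_image (g : GLd d) :
    N2 g = sSup ((fun p => area (glCLM g p.1) (glCLM g p.2)) '' orthonormalPairs d) := by
  rw [N2]
  congr 1
  ext x
  constructor
  · rintro ⟨p, q, hp, hq, hpq, rfl⟩
    exact ⟨(p, q), ⟨hp, hq, hpq⟩, rfl⟩
  · rintro ⟨⟨p, q⟩, ⟨hp, hq, hpq⟩, rfl⟩
    exact ⟨p, q, hp, hq, hpq, rfl⟩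

lemma continuous_N2 : Continuous (N2 : GLd d → ℝ) := by
  simp only [funext N2_eq_sSup_image]
  exact isCompact_orthonormalPairs.continuous_sSup continuous_area_glCLM

lemma area_glCLM_le_N2 (g : GLd d) {p q : Ed d} (hp : ‖p‖ = 1) (hq : ‖q‖ = 1)
    (hpq : inner ℝ p q = 0) : area (glCLM g p) (glCLM g q) ≤ N2 g := by
  rw [N2_eq_sSup_image]
  exact le_csSup (isCompact_orthonormalPairs.bddAbove_image
    (continuous_area_glCLM.comp (f := fun p => (g, p)) (by fun_prop)).continuousOn)
    ⟨(p, q), ⟨hp, hq, hpq⟩, rfl⟩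

lemma area_glCLM_le (g : GLd d) (v w : Ed d) :
    area (glCLM g v) (glCLM g w) ≤ N2 g * area v w :=
  area_map_le (A := (glCLM g).toLinearMap) (fun _ _ => area_glCLM_le_N2 g) v w

lemma N2_nonneg (g : GLd d) : 0 ≤ N2 g :=
  Real.sSup_nonneg fun _ ⟨_, _, _, _, _, hx⟩ => hx ▸ Real.sqrt_nonneg _

lemma N2_pos (hd : 2 ≤ d) (g : GLd d) : 0 < N2 g := by
  obtain ⟨p, q, hp, hq, hpq⟩ := exists_orthonormal_pair hd
  have hinv := area_glCLM_le g⁻¹ (glCLM g p) (glCLM g q)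
  rw [glCLM_leftInv, glCLM_leftInv, area_eq_norm_mul_norm hpq, hp, hq, one_mul] at hinv
  exact (pos_of_mul_pos_right (one_pos.trans_le hinv) (N2_nonneg _)).trans_le
    (area_glCLM_le_N2 g hp hq hpq)

lemma N2_mul_le (g h : GLd d) : N2 (g * h) ≤ N2 g * N2 h := by
  refine Real.sSup_le ?_ (mul_nonneg (N2_nonneg g) (N2_nonneg h))
  rintro x ⟨p, q, hp, hq, hpq, rfl⟩
  calc area (glCLM (g * h) p) (glCLM (g * h) q)
    _ = area (glCLM g (glCLM h p)) (glCLM g (glCLM h q)) := by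
        rw [glCLM_mul_apply, glCLM_mul_apply]
    _ ≤ N2 g * area (glCLM h p) (glCLM h q) := area_glCLM_le _ _ _
    _ ≤ N2 g * N2 h :=
        mul_le_mul_of_nonneg_left (area_glCLM_le_N2 h hp hq hpq) (N2_nonneg g)

lemma log_N2_mul_le (hd : 2 ≤ d) (g h : GLd d) :
    Real.log (N2 (g * h)) ≤ Real.log (N2 g) + Real.log (N2 h) := by
  rw [← Real.log_mul (N2_pos hd g).ne' (N2_pos hd h).ne']
  exact Real.log_le_log (N2_pos hd _) (N2_mul_le g h)

lemma continuous_log_N2 (hd : 2 ≤ d) : Continuous fun g : GLd d => Real.log (N2 g) :=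
  continuous_N2.log fun g => (N2_pos hd g).ne'

lemma pdelta_mk {v w : Ed d} (hv : v ≠ 0) (hw : w ≠ 0) :
    pdelta (Projectivization.mk ℝ v hv) (Projectivization.mk ℝ w hw) =
      area v w / (‖v‖ * ‖w‖) := by
  obtain ⟨a, ha⟩ := Projectivization.exists_smul_eq_mk_rep ℝ v hv
  obtain ⟨b, hb⟩ := Projectivization.exists_smul_eq_mk_rep ℝ w hw
  have hab : |(a : ℝ)| * |(b : ℝ)| ≠ 0 :=
    mul_ne_zero (abs_ne_zero.2 a.ne_zero) (abs_ne_zero.2 b.ne_zero)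
  change area _ _ / _ = _
  rw [← ha, ← hb, Units.smul_def, Units.smul_def, area_smul_left, area_smul_right, norm_smul,
    norm_smul, Real.norm_eq_abs, Real.norm_eq_abs, ← mul_assoc, mul_mul_mul_comm,
    mul_div_mul_left _ _ hab]

lemma pdelta_nonneg (x y : Pd d) : 0 ≤ pdelta x y := by
  unfold pdelta
  positivity

lemma pdelta_le_one (x y : Pd d) : pdelta x y ≤ 1 :=
  div_le_one_of_le₀ (area_le_norm_mul_norm _ _) (by positivity)

lemma eq_of_pdelta_eq_zero {x y : Pd d} (h : pdelta x y = 0) : x = y := by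
  induction x using Projectivization.ind with
  | h v hv =>
    induction y using Projectivization.ind with
    | h w hw =>
      rw [pdelta_mk hv hw, div_eq_zero_iff, or_iff_left (by simp [hv, hw])] at h
      exact (area_eq_zero_iff_mk_eq_mk hv hw).1 h

lemma continuous_pdelta : Continuous (Function.uncurry (pdelta : Pd d → Pd d → ℝ)) := by
  rw [← (isOpenQuotientMap_mk'.prodMap isOpenQuotientMap_mk').continuous_comp_iff]
  have hlift : Continuous fun p : {v : Ed d // v ≠ 0} × {v : Ed d // v ≠ 0} =>
      area p.1.1 p.2.1 / (‖p.1.1‖ * ‖p.2.1‖) :=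
    (continuous_area.comp (f := fun p : {v : Ed d // v ≠ 0} × {v : Ed d // v ≠ 0} =>
      (p.1.1, p.2.1)) (by fun_prop)).div (by fun_prop) fun p =>
        mul_ne_zero (norm_ne_zero_iff.2 p.1.2) (norm_ne_zero_iff.2 p.2.2)
  exact hlift.congr fun p => (pdelta_mk p.1.2 p.2.2).symm

/-- The logarithm of a bound for the factor by which `g` changes the distance `pdelta` of the two
points of `x`. -/
def logDilation (g : GLd d) (x : Pd d × Pd d) : ℝ :=
  Real.log (N2 g) - normCocycle g x.1 - normCocycle g x.2

lemma isSubcocycle_logDilation (hd : 2 ≤ d) :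
    IsSubcocycle (logDilation : GLd d → Pd d × Pd d → ℝ) where
  continuous := by
    have hσ := isCocycle_normCocycle.continuous (X := Pd d)
    exact (((continuous_log_N2 hd).comp continuous_fst).sub
      (hσ.comp (f := fun p : GLd d × Pd d × Pd d => (p.1, p.2.1)) (by fun_prop))).sub
      (hσ.comp (f := fun p : GLd d × Pd d × Pd d => (p.1, p.2.2)) (by fun_prop))
  map_mul_le g h x := by
    have hN := log_N2_mul_le hd g h
    simp only [logDilation, isCocycle_normCocycle.map_mul, Prod.smul_fst, Prod.smul_snd]
    linarith

lemma pdelta_smul_le (hd : 2 ≤ d) (g : GLd d) (x y : Pd d) :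
    pdelta (g • x) (g • y) ≤ Real.exp (logDilation g (x, y)) * pdelta x y := by
  induction x using Projectivization.ind with
  | h v hv =>
    induction y using Projectivization.ind with
    | h w hw =>
      have hv' := norm_pos_iff.2 hv
      have hw' := norm_pos_iff.2 hw
      have hgv := norm_pos_iff.2 (glCLM_ne_zero g hv)
      have hgw := norm_pos_iff.2 (glCLM_ne_zero g hw)
      rw [smul_mk, smul_mk, pdelta_mk, pdelta_mk, logDilation, normCocycle_mk, normCocycle_mk,
        Real.exp_sub, Real.exp_sub, Real.exp_log (N2_pos hd g), Real.exp_log (div_pos hgv hv'),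
        Real.exp_log (div_pos hgw hw')]
      calc area (glCLM g v) (glCLM g w) / (‖glCLM g v‖ * ‖glCLM g w‖)
        _ ≤ N2 g * area v w / (‖glCLM g v‖ * ‖glCLM g w‖) := by
            gcongr
            exact area_glCLM_le g v w
        _ = N2 g / (‖glCLM g v‖ / ‖v‖) / (‖glCLM g w‖ / ‖w‖) * (area v w / (‖v‖ * ‖w‖)) := by
            field_simp

end ProjectiveContraction

section LyapunovExponents

/-- The operator norm of the restriction of `g` to the subspace `V`. -/
def restrictNorm (V : Submodule ℝ (Ed d)) (g : GLd d) : ℝ :=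
  ‖(glCLM g).comp V.subtypeL‖

/-- The matrices mapping the subspace `V` into itself. -/
def submoduleStabilizer (V : Submodule ℝ (Ed d)) : Submonoid (GLd d) where
  carrier := {g | ∀ v ∈ V, glCLM g v ∈ V}
  one_mem' v hv := by rwa [glCLM_one]
  mul_mem' hg hh v hv := by
    rw [glCLM_mul_apply]
    exact hg _ (hh v hv)

lemma isClosed_submoduleStabilizer (V : Submodule ℝ (Ed d)) :
    IsClosed (submoduleStabilizer V : Set (GLd d)) := by
  have hinter : (submoduleStabilizer V : Set (GLd d)) = ⋂ v ∈ V, {g | glCLM g v ∈ V} := by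
    ext g
    simp [submoduleStabilizer]
  rw [hinter]
  exact isClosed_biInter fun v _ =>
    V.closed_of_finiteDimensional.preimage (continuous_glCLM.clm_apply continuous_const)

lemma map_eq_of_mem_submoduleStabilizer {V : Submodule ℝ (Ed d)} {g : GLd d}
    (hg : g ∈ submoduleStabilizer V) : V.map (glCLM g).toLinearMap = V :=
  Submodule.eq_of_le_of_finrank_eq (Submodule.map_le_iff_le_comap.2 hg)
    (Submodule.equivMapOfInjective _ (glLinear_injective g) V).symm.finrank_eq

section RestrictNorm

variable {V : Submodule ℝ (Ed d)}

lemma norm_glCLM_le_restrictNorm (g : GLd d) {v : Ed d} (hv : v ∈ V) :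
    ‖glCLM g v‖ ≤ restrictNorm V g * ‖v‖ :=
  ((glCLM g).comp V.subtypeL).le_opNorm ⟨v, hv⟩

lemma restrictNorm_nonneg (V : Submodule ℝ (Ed d)) (g : GLd d) : 0 ≤ restrictNorm V g :=
  norm_nonneg ((glCLM g).comp V.subtypeL)

lemma restrictNorm_pos (hV : V ≠ ⊥) (g : GLd d) : 0 < restrictNorm V g := by
  obtain ⟨v, hv, hv₀⟩ := V.exists_mem_ne_zero_of_ne_bot hV
  exact pos_of_mul_pos_left ((norm_pos_iff.2 (glCLM_ne_zero g hv₀)).trans_le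
    (norm_glCLM_le_restrictNorm g hv)) (norm_nonneg v)

lemma continuous_log_restrictNorm (hV : V ≠ ⊥) :
    Continuous fun g => Real.log (restrictNorm V g) :=
  (continuous_glCLM.clm_comp continuous_const).norm.log fun g => (restrictNorm_pos hV g).ne'

lemma restrictNorm_mul_le (g : GLd d) {h : GLd d} (hh : h ∈ submoduleStabilizer V) :
    restrictNorm V (g * h) ≤ restrictNorm V g * restrictNorm V h := by
  refine ContinuousLinearMap.opNorm_le_bound _
    (mul_nonneg (restrictNorm_nonneg V g) (restrictNorm_nonneg V h)) fun v => ?_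
  calc ‖glCLM (g * h) v‖
    _ = ‖glCLM g (glCLM h v)‖ := by rw [glCLM_mul_apply]
    _ ≤ restrictNorm V g * ‖glCLM h v‖ := norm_glCLM_le_restrictNorm g (hh v v.2)
    _ ≤ restrictNorm V g * (restrictNorm V h * ‖v‖) :=
        mul_le_mul_of_nonneg_left (norm_glCLM_le_restrictNorm h v.2) (restrictNorm_nonneg V g)
    _ = restrictNorm V g * restrictNorm V h * ‖v‖ := (mul_assoc _ _ _).symm

lemma restrictNorm_top (g : GLd d) : restrictNorm ⊤ g = gnorm g :=
  le_antisymm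
    (ContinuousLinearMap.opNorm_le_bound _ (norm_nonneg _) fun v => (glCLM g).le_opNorm v)
    (ContinuousLinearMap.opNorm_le_bound _ (restrictNorm_nonneg ⊤ g)
      fun _ => norm_glCLM_le_restrictNorm g Submodule.mem_top)

end RestrictNorm

lemma mconvN_eq_convPow (μ : Measure (GLd d)) [SFinite μ] (n : ℕ) :
    mconvN μ n = convPow μ n := by
  induction n with
  | zero => rfl
  | succ n ih =>
    rcases eq_or_ne n 0 with rfl | hn
    · exact (convPow_one μ).symm
    · rw [mconvN, if_neg hn, ih]
      rfl

lemma L1rest_top (μ : Measure (GLd d)) : L1rest μ ⊤ = L1 μ := by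
  simp only [L1, ← restrictNorm_top]
  rfl

lemma QuasiIrreducible.L1_le_L1rest {μ : Measure (GLd d)} (hqi : QuasiIrreducible μ)
    {V : Submodule ℝ (Ed d)} (hV : V ≠ ⊥) (hμV : ∀ᵐ g ∂μ, g ∈ submoduleStabilizer V) :
    L1 μ ≤ L1rest μ V := by
  rcases eq_or_ne V ⊤ with rfl | hV'
  · exact (L1rest_top μ).ge
  · by_contra! hlt
    exact hqi ⟨V, hV, hV', hμV.mono fun g hg => map_eq_of_mem_submoduleStabilizer hg, hlt⟩

variable {μ : Measure (GLd d)} [IsProbabilityMeasure μ]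

lemma tendsto_L12 (hd : 2 ≤ d) (hμ : IsCompactlySupported μ) :
    Tendsto (fun n : ℕ => (n : ℝ)⁻¹ * ∫ g, Real.log (N2 g) ∂convPow μ n) atTop
      (nhds (L12 μ)) := by
  simp only [L12, mconvN_eq_convPow]
  exact tendsto_nhds_limUnder <| exists_tendsto_integral_convPow_of_subadditive (T := ⊤) hμ
    (continuous_log_N2 hd) isClosed_univ (Eventually.of_forall fun _ => trivial)
    fun g h _ => log_N2_mul_le hd g h

lemma tendsto_L1rest {V : Submodule ℝ (Ed d)} (hV : V ≠ ⊥) (hμ : IsCompactlySupported μ)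
    (hμV : ∀ᵐ g ∂μ, g ∈ submoduleStabilizer V) :
    Tendsto (fun n : ℕ => (n : ℝ)⁻¹ * ∫ g, Real.log (restrictNorm V g) ∂convPow μ n) atTop
      (nhds (L1rest μ V)) := by
  simp only [L1rest, mconvN_eq_convPow]
  refine tendsto_nhds_limUnder <| exists_tendsto_integral_convPow_of_subadditive hμ
    (continuous_log_restrictNorm hV) (isClosed_submoduleStabilizer V) hμV fun g h hh => ?_
  rw [← Real.log_mul (restrictNorm_pos hV g).ne' (restrictNorm_pos hV h).ne']
  exact Real.log_le_log (restrictNorm_pos hV _) (restrictNorm_mul_le g hh)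

end LyapunovExponents

section LowerBound

lemma exists_minimal_submodule_ae_rep_mem (η : Measure (Pd d)) :
    ∃ V : Submodule ℝ (Ed d), (∀ᵐ x ∂η, x.rep ∈ V) ∧
      ∀ W : Submodule ℝ (Ed d), (∀ᵐ x ∂η, x.rep ∈ W) → V ≤ W := by
  have htop : ∀ᵐ x ∂η, x.rep ∈ (⊤ : Submodule ℝ (Ed d)) :=
    Eventually.of_forall fun _ => Submodule.mem_top
  obtain ⟨V, hV : ∀ᵐ x : Pd d ∂η, x.rep ∈ V, hmin⟩ := wellFounded_lt.has_min
    {V : Submodule ℝ (Ed d) | ∀ᵐ x : Pd d ∂η, x.rep ∈ V} ⟨⊤, htop⟩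
  exact ⟨V, hV, fun W hW => inf_eq_left.1 <|
    eq_of_le_of_not_lt inf_le_left (hmin (V ⊓ W) (hV.and hW))⟩

lemma rep_smul_mem_iff {V : Submodule ℝ (Ed d)} (g : GLd d) (x : Pd d) :
    (g • x).rep ∈ V ↔ glCLM g x.rep ∈ V := by
  obtain ⟨a, ha⟩ := Projectivization.exists_smul_eq_mk_rep ℝ _ (glCLM_ne_zero g x.rep_nonzero)
  rw [← smul_mk g x.rep_nonzero, x.mk_rep, Units.smul_def] at ha
  rw [← ha, V.smul_mem_iff a.ne_zero]

lemma IsStationaryMeasure.ae_mem_submoduleStabilizer {μ : Measure (GLd d)} {η : Measure (Pd d)}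
    [IsProbabilityMeasure η] (hη : IsStationaryMeasure μ η) {V : Submodule ℝ (Ed d)}
    (hV : ∀ᵐ x ∂η, x.rep ∈ V)
    (hmin : ∀ W : Submodule ℝ (Ed d), (∀ᵐ x ∂η, x.rep ∈ W) → V ≤ W) :
    ∀ᵐ g ∂μ, g ∈ submoduleStabilizer V := by
  filter_upwards [hη.ae_smul hV] with g hg
  exact hmin (V.comap (glCLM g).toLinearMap) (hg.mono fun x => (rep_smul_mem_iff g x).1)

lemma norm_glCLM_rep (g : GLd d) (x : Pd d) :
    ‖glCLM g x.rep‖ = ‖x.rep‖ * Real.exp (normCocycle g x) := by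
  have hx := norm_pos_iff.2 x.rep_nonzero
  have hgx := norm_pos_iff.2 (glCLM_ne_zero g x.rep_nonzero)
  rw [normCocycle, Real.exp_log (div_pos hgx hx), mul_div_cancel₀ _ hx.ne']

lemma exists_log_restrictNorm_span_le {ι : Type*} [Fintype ι] {x : ι → Pd d}
    (hx : LinearIndependent ℝ fun i => (x i).rep)
    (hne : Submodule.span ℝ (Set.range fun i => (x i).rep) ≠ ⊥) :
    ∃ C, ∀ (g : GLd d) (b : ℝ),
      Real.log (restrictNorm (Submodule.span ℝ (Set.range fun i => (x i).rep)) g) ≤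
        C + b + ∑ i, max (normCocycle g (x i) - b) 0 := by
  obtain ⟨C, hC, hCle⟩ := (Module.Basis.span hx).exists_opNorm_le (F := Ed d)
  let S := 1 + ∑ i, ‖(x i).rep‖
  refine ⟨Real.log (C * S), fun g b => ?_⟩
  set s := ∑ i, max (normCocycle g (x i) - b) 0
  have hbasis (i : ι) : ‖glCLM g (x i).rep‖ ≤ S * Real.exp (b + s) := by
    have hrep := Finset.single_le_sum (f := fun i => ‖(x i).rep‖)
      (fun _ _ => norm_nonneg _) (Finset.mem_univ i)
    have hexcess := Finset.single_le_sum (f := fun i => max (normCocycle g (x i) - b) 0)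
      (fun _ _ => le_max_right _ _) (Finset.mem_univ i)
    rw [norm_glCLM_rep]
    gcongr
    · exact hrep.trans (le_add_of_nonneg_left zero_le_one)
    · linarith [le_max_left (normCocycle g (x i) - b) 0]
  have hnorm : restrictNorm (Submodule.span ℝ (Set.range fun i => (x i).rep)) g ≤
      C * (S * Real.exp (b + s)) :=
    hCle (by positivity) fun i => by simpa [Module.Basis.span_apply] using hbasis i
  calc _ ≤ Real.log (C * (S * Real.exp (b + s))) :=
        Real.log_le_log (restrictNorm_pos hne g) hnorm
    _ = Real.log (C * S) + b + s := by
        rw [← mul_assoc, Real.log_mul (by positivity) (by positivity), Real.log_exp, add_assoc]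

variable {μ : Measure (GLd d)} [IsProbabilityMeasure μ]

lemma integral_log_restrictNorm_le {V : Submodule ℝ (Ed d)} (hV : V ≠ ⊥)
    (hμ : IsCompactlySupported μ) {ι : Type*} [Fintype ι] {x : ι → Pd d} {C b : ℝ}
    (hC : ∀ g, Real.log (restrictNorm V g) ≤
      C + b + ∑ i, max (normCocycle g (x i) - b) 0) :
    ∫ g, Real.log (restrictNorm V g) ∂μ ≤ C + b + ∑ i, excess normCocycle b μ (x i) := by
  have hσ := isCocycle_normCocycle.continuous (X := Pd d)
  have hexcess (i : ι) : Integrable (fun g => max (normCocycle g (x i) - b) 0) μ :=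
    hμ.integrable (by fun_prop)
  calc ∫ g, Real.log (restrictNorm V g) ∂μ
    _ ≤ ∫ g, (C + b + ∑ i, max (normCocycle g (x i) - b) 0) ∂μ :=
        integral_mono (hμ.integrable (continuous_log_restrictNorm hV))
          ((integrable_const _).add (integrable_finsetSum _ fun i _ => hexcess i)) hC
    _ = C + b + ∑ i, excess normCocycle b μ (x i) := by
        rw [integral_add (integrable_const _) (integrable_finsetSum _ fun i _ => hexcess i),
          integral_finsetSum _ fun i _ => hexcess i, integral_const, probReal_univ, one_smul]
        rfl

lemma L1rest_span_le {β : ℝ} {φ : ℕ → ℕ} (hφ : StrictMono φ) {ι : Type*} [Finite ι]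
    {x : ι → Pd d} (hx : LinearIndependent ℝ fun i => (x i).rep) {V : Submodule ℝ (Ed d)}
    (hV : V ≠ ⊥) (hxV : Submodule.span ℝ (Set.range fun i => (x i).rep) = V)
    (hμ : IsCompactlySupported μ) (hμV : ∀ᵐ g ∂μ, g ∈ submoduleStabilizer V)
    (hlim : ∀ i, Tendsto (fun j => excess normCocycle (φ j * β) (convPow μ (φ j)) (x i) / φ j)
      atTop (nhds 0)) :
    L1rest μ V ≤ β := by
  subst hxV
  have := Fintype.ofFinite ι
  obtain ⟨C, hC⟩ := exists_log_restrictNorm_span_le hx hV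
  have hφ' : Tendsto (fun j => (φ j : ℝ)) atTop atTop :=
    tendsto_natCast_atTop_atTop.comp hφ.tendsto_atTop
  have hbound : Tendsto (fun j => C / φ j + β +
      ∑ i, excess normCocycle (φ j * β) (convPow μ (φ j)) (x i) / φ j) atTop (nhds β) := by
    simpa using ((tendsto_const_nhds (x := C)).div_atTop hφ').add_const β |>.add
      (tendsto_finsetSum Finset.univ fun i _ => hlim i)
  refine le_of_tendsto_of_tendsto ((tendsto_L1rest hV hμ hμV).comp hφ.tendsto_atTop) hbound ?_
  filter_upwards [hφ'.eventually_gt_atTop 0] with j hj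
  rw [Function.comp_apply, inv_mul_le_iff₀ hj]
  refine (integral_log_restrictNorm_le hV (hμ.convPow _) fun g => hC g (φ j * β)).trans_eq ?_
  rw [← Finset.sum_div]
  field_simp

lemma exists_linearIndependent_rep_of_ae {η : Measure (Pd d)} {V : Submodule ℝ (Ed d)}
    (hV : ∀ᵐ x ∂η, x.rep ∈ V)
    (hmin : ∀ W : Submodule ℝ (Ed d), (∀ᵐ x ∂η, x.rep ∈ W) → V ≤ W) {p : Pd d → Prop}
    (hp : ∀ᵐ x ∂η, p x) :
    ∃ (n : ℕ) (x : Fin n → Pd d), (LinearIndependent ℝ fun i => (x i).rep) ∧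
      Submodule.span ℝ (Set.range fun i => (x i).rep) = V ∧ ∀ i, p (x i) := by
  let T : Set (Ed d) := Projectivization.rep '' {x : Pd d | x.rep ∈ V ∧ p x}
  have hT : Submodule.span ℝ T = V :=
    le_antisymm (Submodule.span_le.2 (Set.image_subset_iff.2 fun x hx => hx.1))
      (hmin _ ((hV.and hp).mono fun x hx => Submodule.subset_span (Set.mem_image_of_mem _ hx)))
  obtain ⟨v, hvT, hspan, hli⟩ := Submodule.exists_fun_fin_finrank_span_eq ℝ T
  choose x hx hxv using hvT
  obtain rfl : v = fun i => (x i).rep := funext fun i => (hxv i).symm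
  exact ⟨_, x, hli, hspan.trans hT, fun i => (hx i).2⟩

lemma QuasiIrreducible.eventually_le_drift [Nonempty (Pd d)] (hqi : QuasiIrreducible μ)
    (hμ : IsCompactlySupported μ) {ε : ℝ} (hε : 0 < ε) :
    ∀ᶠ n : ℕ in atTop, ∀ x : Pd d, n * (L1 μ - ε) ≤ drift normCocycle (convPow μ n) x := by
  obtain ⟨β, hβ, y, hy⟩ := isCocycle_normCocycle.exists_minimal_drift (X := Pd d) hμ
  obtain ⟨η, hηprob, hη, hηβ⟩ := isCocycle_normCocycle.exists_isStationaryMeasure hμ hy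
  obtain ⟨φ, hφ, hgood⟩ := isCocycle_normCocycle.exists_seq_tendsto_excess_div hμ hβ hη hηβ
  obtain ⟨V, hV, hmin⟩ := exists_minimal_submodule_ae_rep_mem η
  obtain ⟨m, x, hx, hxV, hlim⟩ := exists_linearIndependent_rep_of_ae hV hmin hgood
  have hμV := hη.ae_mem_submoduleStabilizer hV hmin
  have hV₀ : V ≠ ⊥ := by
    rintro rfl
    obtain ⟨z, hz⟩ := hV.exists
    exact z.rep_nonzero ((Submodule.mem_bot ℝ).1 hz)
  have hL1 : L1 μ ≤ β :=
    (hqi.L1_le_L1rest hV₀ hμV).trans (L1rest_span_le hφ hx hV₀ hxV hμ hμV hlim)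
  filter_upwards [hβ ε hε] with n hn z
  exact (mul_le_mul_of_nonneg_left (by linarith) n.cast_nonneg).trans (hn z)

end LowerBound

section UniformContraction

lemma Stationary.isStationaryMeasure {μ : Measure (GLd d)} [IsProbabilityMeasure μ]
    {η : Measure (Pd d)} [IsProbabilityMeasure η] (hη : Stationary μ η) :
    IsStationaryMeasure μ η := by
  refine isStationaryMeasure_of_forall_integral_eq fun f hf => ?_
  obtain ⟨C, hC⟩ := isCompact_univ.exists_bound_of_continuousOn hf.continuousOn
  rw [hη f hf ⟨C, fun v => hC v trivial⟩]
  exact integral_integral_swap (integrable_comp_smul μ η hf)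

variable {μ : Measure (GLd d)} [IsProbabilityMeasure μ]

lemma integral_logDilation (hd : 2 ≤ d) (hμ : IsCompactlySupported μ) (x : Pd d × Pd d) :
    ∫ g, logDilation g x ∂μ =
      ∫ g, Real.log (N2 g) ∂μ - drift normCocycle μ x.1 - drift normCocycle μ x.2 := by
  have hσ := isCocycle_normCocycle.continuous (X := Pd d)
  have hnorm (y : Pd d) : Integrable (fun g => normCocycle g y) μ := hμ.integrable (by fun_prop)
  have hN := hμ.integrable (continuous_log_N2 hd)
  have hsub : Integrable (fun g => Real.log (N2 g) - normCocycle g x.1) μ := hN.sub (hnorm _)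
  simp only [logDilation]
  rw [integral_sub hsub (hnorm _), integral_sub hN (hnorm _)]
  rfl

lemma QuasiIrreducible.exists_integral_logDilation_le [Nonempty (Pd d)]
    (hqi : QuasiIrreducible μ) (hd : 2 ≤ d) (hμ : IsCompactlySupported μ) (hgap : L2 μ < L1 μ) :
    ∃ (n : ℕ) (a : ℝ), a < 0 ∧ ∀ x, ∫ g, logDilation g x ∂convPow μ n ≤ a := by
  obtain ⟨ε, hε, hεgap⟩ : ∃ ε > 0, 4 * ε = L1 μ - (L12 μ - L1 μ) :=
    ⟨(L1 μ - L2 μ) / 4, by linarith, by rw [L2]; ring⟩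
  obtain ⟨n, ⟨hdrift, hN⟩, hn⟩ := (((hqi.eventually_le_drift hμ hε).and
    ((tendsto_L12 hd hμ).eventually_lt_const (lt_add_of_pos_right _ hε))).and
    (tendsto_natCast_atTop_atTop.eventually_gt_atTop (0 : ℝ))).exists
  rw [inv_mul_lt_iff₀ hn] at hN
  refine ⟨n, -(n * ε), neg_lt_zero.2 (mul_pos hn hε), fun x => ?_⟩
  calc ∫ g, logDilation g x ∂convPow μ n
    _ = ∫ g, Real.log (N2 g) ∂convPow μ n - drift normCocycle (convPow μ n) x.1 -
          drift normCocycle (convPow μ n) x.2 := integral_logDilation hd (hμ.convPow n) x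
    _ ≤ n * (L12 μ + ε) - n * (L1 μ - ε) - n * (L1 μ - ε) := by
        linarith [hdrift x.1, hdrift x.2]
    _ = -(n * ε) := by linear_combination (n : ℝ) * hεgap

lemma rpow_pdelta_smul_le (hd : 2 ≤ d) {t : ℝ} (ht : 0 ≤ t) (g : GLd d) (x y : Pd d) :
    pdelta (g • x) (g • y) ^ t ≤ Real.exp (t * logDilation g (x, y)) := by
  calc pdelta (g • x) (g • y) ^ t
    _ ≤ Real.exp (logDilation g (x, y)) ^ t :=
        Real.rpow_le_rpow (pdelta_nonneg _ _) ((pdelta_smul_le hd g x y).trans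
          (mul_le_of_le_one_right (Real.exp_pos _).le (pdelta_le_one x y))) ht
    _ = Real.exp (t * logDilation g (x, y)) := by rw [← Real.exp_mul, mul_comm]

lemma QuasiIrreducible.exists_integral_rpow_pdelta_le [Nonempty (Pd d)]
    (hqi : QuasiIrreducible μ) (hd : 2 ≤ d) (hμ : IsCompactlySupported μ) (hgap : L2 μ < L1 μ) :
    ∃ t : ℝ, 0 < t ∧ ∀ ε > 0, ∃ n, ∀ x y : Pd d,
      ∫ g, pdelta (g • x) (g • y) ^ t ∂convPow μ n ≤ ε := by
  obtain ⟨m, a, ha, hma⟩ := hqi.exists_integral_logDilation_le hd hμ hgap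
  obtain ⟨t, ht, hexp⟩ := (isSubcocycle_logDilation hd).exists_integral_exp_convPow_le
    (hμ.convPow m) (show a < a / 2 by linarith) hma
  refine ⟨t, ht, fun ε hε => ?_⟩
  have hlt : Real.exp (t * (a / 2)) < 1 :=
    Real.exp_lt_one_iff.2 (mul_neg_of_pos_of_neg ht (by linarith))
  obtain ⟨k, hk⟩ := exists_pow_lt_of_lt_one hε hlt
  refine ⟨m * (k + 1), fun x y => ?_⟩
  have hσ := (isSubcocycle_logDilation hd).continuous
  have hδ : Continuous fun g : GLd d => pdelta (g • x) (g • y) :=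
    continuous_pdelta.comp (f := fun g : GLd d => (g • x, g • y)) (by fun_prop)
  calc ∫ g, pdelta (g • x) (g • y) ^ t ∂convPow μ (m * (k + 1))
    _ ≤ ∫ g, Real.exp (t * logDilation g (x, y)) ∂convPow μ (m * (k + 1)) :=
        integral_mono
          ((hμ.convPow _).integrable (hδ.rpow_const fun _ => Or.inr ht.le))
          ((hμ.convPow _).integrable (by fun_prop))
          fun g => rpow_pdelta_smul_le hd ht.le g x y
    _ ≤ Real.exp (t * (a / 2)) ^ (k + 1) := convPow_convPow μ m (k + 1) ▸ hexp k (x, y)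
    _ ≤ Real.exp (t * (a / 2)) ^ k :=
        pow_le_pow_of_le_one (Real.exp_pos _).le hlt.le k.le_succ
    _ ≤ ε := hk.le

end UniformContraction

theorem stationary_measure_unique
    (d : ℕ) (hd : 2 ≤ d) (S : Set (GLd d)) (hS : IsCompact S)
    (μ₀ : Measure (GLd d)) [IsProbabilityMeasure μ₀] (hμ₀S : μ₀ Sᶜ = 0)
    (hqi : QuasiIrreducible μ₀) (hgap : L2 μ₀ < L1 μ₀) :
    ∀ (η₁ η₂ : Measure (Pd d)) [IsProbabilityMeasure η₁] [IsProbabilityMeasure η₂],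
      Stationary μ₀ η₁ → Stationary μ₀ η₂ → η₁ = η₂ := by
  intro η₁ η₂ _ _ hη₁ hη₂
  have : NeZero d := ⟨by lia⟩
  have hμ : IsCompactlySupported μ₀ := ⟨S, hS, hμ₀S⟩
  obtain ⟨t, ht, hcontr⟩ := hqi.exists_integral_rpow_pdelta_le hd hμ hgap
  refine IsStationaryMeasure.eq_of_contracting hμ (D := fun x y => pdelta x y ^ t)
    (continuous_pdelta.rpow_const fun _ => Or.inr ht.le)
    (fun x y => Real.rpow_nonneg (pdelta_nonneg x y) t) (fun x y h => ?_) hcontr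
    hη₁.isStationaryMeasure hη₂.isStationaryMeasure
  exact eq_of_pdelta_eq_zero ((Real.rpow_eq_zero (pdelta_nonneg x y) ht.ne').1 h)

end
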